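/- arXiv:1104.3607 — 2 statements merged into one kernel-verified Lean document; each statement's English description precedes it below -/
import Mathlib

section
/- Let k be a field of characteristic 0, X a type, and L = FreeLieAlgebra k X the free Lie algebra on X. Let d_n : ⋀^n L → ⋀^{n−1} L be the Chevalley–Eilenberg differentials with trivial coefficients, i.e. the unique linear maps with d_n(l₁∧…∧l_n) = Σ_{1≤i<j≤n} (−1)^{i+j−1} [l_i,l_j]∧l₁∧…∧l̂_i∧…∧l̂_j∧…∧l_n. Then: (1) ker d_n = range d_{n+1} for every n ≥ 2; and (2) the composite of the canonical generator map X → L with the quotient map L → L ⧸ range d₂ extends to a k-linear isomorphism from the free k-vector space on X onto L ⧸ range d₂. In other words, the Chevalley–Eilenberg homology of a free Lie algebra with trivial coefficients vanishes in degrees ≥ 2 and equals the space spanned by the generators in degree 1. -/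
/-!
STATEMENT 3: the Chevalley–Eilenberg homology of a free Lie algebra with trivial coefficients
vanishes in degrees ≥ 2 and equals the space spanned by the generators in degree 1.
As in Statement 1, the family is indexed by `D n : ⋀^(n+1) L → ⋀^n L`, i.e. `D n = d_{n+1}`.
-/

open scoped TensorProduct

set_option synthInstance.maxHeartbeats 1000000
set_option maxHeartbeats 1000000

/-- The wedge `v₁ ∧ … ∧ vₙ`, as an element of the `n`-th exterior power `⋀[k]^n L`. -/
noncomputable def wedge (k : Type*) [Field k] {L : Type*} [AddCommGroup L] [Module k L]
    (n : ℕ) (v : Fin n → L) : ⋀[k]^n L :=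
  ⟨ExteriorAlgebra.ιMulti k n v, ExteriorAlgebra.ιMulti_range k n (Set.mem_range_self v)⟩

/-- The strictly monotone map `Fin n → Fin (n+2)` omitting the two indices `i < j`. -/
def omit2 {n : ℕ} (i j : Fin (n + 2)) (h : i < j) (m : Fin n) : Fin (n + 2) :=
  j.succAbove ((i.castLT ((Fin.lt_def.mp h).trans_le (Nat.lt_succ_iff.mp j.isLt))).succAbove m)

/-- The generator condition for the Chevalley–Eilenberg differential with trivial
coefficients (see Statement 1). -/
def IsCEDiff (k : Type*) [Field k] (L : Type*) [LieRing L] [LieAlgebra k L]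
    (D : (n : ℕ) → (⋀[k]^(n+1) L →ₗ[k] ⋀[k]^n L)) : Prop :=
  (∀ l : Fin 1 → L, D 0 (wedge k 1 l) = 0) ∧
  (∀ (n : ℕ) (l : Fin (n + 2) → L),
    D (n + 1) (wedge k (n + 2) l) =
      ∑ i : Fin (n + 2), ∑ j : Fin (n + 2),
        if h : i < j then
          ((-1 : k) ^ (i.val + j.val + 1)) •
            wedge k (n + 1) (Fin.cons ⁅l i, l j⁆ (fun m => l (omit2 i j h m)))
        else 0)


namespace CEFree

section General

variable {k : Type*} [Field k] {L : Type*} [LieRing L] [LieAlgebra k L]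
variable {V W : Type*} [AddCommGroup V] [Module k V] [AddCommGroup W] [Module k W]

theorem ext_induction {P : ExteriorAlgebra k V → Prop} (one : P 1)
    (smul : ∀ (r : k) x, P x → P (r • x))
    (add : ∀ x y, P x → P y → P (x + y))
    (ι_mul : ∀ a x, P x → P (ExteriorAlgebra.ι k a * x)) (x) : P x := by
  induction x using CliffordAlgebra.left_induction with
  | algebraMap r => rw [Algebra.algebraMap_eq_smul_one]; exact smul _ _ one
  | add x y hx hy => exact add x y hx hy
  | ι_mul x m hx => exact ι_mul m x hx

/-- auxiliary map for the derivation extension -/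
noncomputable def thetaAux (f : V →ₗ[k] V) :
    V →ₗ[k] (ExteriorAlgebra k V × ExteriorAlgebra k V) →ₗ[k] ExteriorAlgebra k V :=
  LinearMap.mk₂ k (fun a z => ExteriorAlgebra.ι k (f a) * z.1 + ExteriorAlgebra.ι k a * z.2)
    (by intros; simp [add_mul]; abel)
    (by intros; simp)
    (by intros; simp [mul_add]; abel)
    (by intros; simp)

/-- The derivation of the exterior algebra extending a linear map. -/
noncomputable def theta (f : V →ₗ[k] V) : ExteriorAlgebra k V →ₗ[k] ExteriorAlgebra k V :=
  CliffordAlgebra.foldr' _ (thetaAux f) (by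
    intro a x fx
    change ExteriorAlgebra.ι k (f a) * (ExteriorAlgebra.ι k a * x) + ExteriorAlgebra.ι k a *
      (ExteriorAlgebra.ι k (f a) * x + ExteriorAlgebra.ι k a * fx) = (0 : k) • fx
    have h1 := ExteriorAlgebra.ι_add_mul_swap (R := k) (f a) a
    have h2 := ExteriorAlgebra.ι_sq_zero (R := k) a
    rw [mul_add, ← mul_assoc, ← mul_assoc, ← mul_assoc, ← add_assoc, ← add_mul, h1, h2]
    simp) 0

theorem theta_ι_mul (f : V →ₗ[k] V) (a : V) (z : ExteriorAlgebra k V) :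
    theta f (ExteriorAlgebra.ι k a * z) =
      ExteriorAlgebra.ι k (f a) * z + ExteriorAlgebra.ι k a * theta f z :=
  CliffordAlgebra.foldr'_ι_mul _ _ _ _ _ _

theorem theta_one (f : V →ₗ[k] V) : theta f 1 = 0 := by
  have := CliffordAlgebra.foldr'_algebraMap (Q := (0 : QuadraticForm k V)) (thetaAux f)
    (by
      intro a x fx
      change ExteriorAlgebra.ι k (f a) * (ExteriorAlgebra.ι k a * x) + ExteriorAlgebra.ι k a *
        (ExteriorAlgebra.ι k (f a) * x + ExteriorAlgebra.ι k a * fx) = (0 : k) • fx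
      have h1 := ExteriorAlgebra.ι_add_mul_swap (R := k) (f a) a
      have h2 := ExteriorAlgebra.ι_sq_zero (R := k) a
      rw [mul_add, ← mul_assoc, ← mul_assoc, ← mul_assoc, ← add_assoc, ← add_mul, h1, h2]
      simp) 0 1
  rw [map_one, smul_zero] at this
  exact this

theorem theta_ι (f : V →ₗ[k] V) (a : V) :
    theta f (ExteriorAlgebra.ι k a) = ExteriorAlgebra.ι k (f a) := by
  have := theta_ι_mul f a 1
  rwa [theta_one, mul_one, mul_one, mul_zero, add_zero] at this

theorem theta_add (f g : V →ₗ[k] V) (z : ExteriorAlgebra k V) :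
    theta (f + g) z = theta f z + theta g z := by
  induction z using ext_induction with
  | one => simp [theta_one]
  | smul r x h => simp [h]
  | add x y hx hy => simp only [map_add, hx, hy]; abel
  | ι_mul a x h => simp only [theta_ι_mul, h, LinearMap.add_apply, map_add, add_mul, mul_add]; abel

theorem theta_smul (c : k) (f : V →ₗ[k] V) (z : ExteriorAlgebra k V) :
    theta (c • f) z = c • theta f z := by
  induction z using ext_induction with
  | one => simp [theta_one]
  | smul r x h => simp [h, smul_comm r c]
  | add x y hx hy => simp only [map_add, hx, hy, smul_add]
  | ι_mul a x h => simp [theta_ι_mul, h]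

theorem theta_zero (z : ExteriorAlgebra k V) : theta (0 : V →ₗ[k] V) z = 0 := by
  have := theta_smul (0 : k) (0 : V →ₗ[k] V) z
  simpa using this

/-- commutator of derivations -/
theorem theta_comm (f g h : V →ₗ[k] V) (hfg : ∀ a, f (g a) - g (f a) = h a)
    (z : ExteriorAlgebra k V) :
    theta f (theta g z) - theta g (theta f z) = theta h z := by
  induction z using ext_induction with
  | one => simp [theta_one]
  | smul r x h => simp only [map_smul, ← h, smul_sub]
  | add x y hx hy => simp only [map_add, ← hx, ← hy]; abel
  | ι_mul a x h =>
    simp only [theta_ι_mul, map_add, ← h, ← hfg, map_sub, sub_mul, mul_sub]; abel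

theorem theta_map (f : V →ₗ[k] V) (g : W →ₗ[k] W) (j : V →ₗ[k] W)
    (hj : ∀ a, j (f a) = g (j a)) (z : ExteriorAlgebra k V) :
    ExteriorAlgebra.map j (theta f z) = theta g (ExteriorAlgebra.map j z) := by
  induction z using ext_induction with
  | one => simp [theta_one]
  | smul r x h => simp [h]
  | add x y hx hy => simp only [map_add, hx, hy]
  | ι_mul a x h =>
    simp only [theta_ι_mul, map_add, map_mul, ExteriorAlgebra.map_apply_ι, h, hj]

/-- `ad a` as a linear map -/
def adl (a : L) : L →ₗ[k] L where
  toFun b := ⁅a, b⁆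
  map_add' := by simp
  map_smul' := by simp

@[simp] theorem adl_apply (a b : L) : adl (k := k) a b = ⁅a, b⁆ := rfl

theorem adl_add (a b : L) : adl (k := k) (a + b) = adl a + adl b := by ext; simp
theorem adl_smul (c : k) (a : L) : adl (k := k) (c • a) = c • adl a := by ext; simp

/-- auxiliary map for the differential -/
noncomputable def dAux :
    L →ₗ[k] (ExteriorAlgebra k L × ExteriorAlgebra k L) →ₗ[k] ExteriorAlgebra k L :=
  LinearMap.mk₂ k (fun a z => theta (adl a) z.1 - ExteriorAlgebra.ι k a * z.2)
    (by intros; simp [add_mul, adl_add, theta_add]; abel)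
    (by intros; simp [adl_smul, theta_smul, smul_sub])
    (by intros; simp [mul_add]; abel)
    (by intros; simp [smul_sub])

theorem dAux_cond (a : L) (x fx : ExteriorAlgebra k L) :
    dAux a (ExteriorAlgebra.ι k a * x, dAux a (x, fx)) = (0 : QuadraticForm k L) a • fx := by
  change theta (adl a) (ExteriorAlgebra.ι k a * x) - ExteriorAlgebra.ι k a *
    (theta (adl a) x - ExteriorAlgebra.ι k a * fx) = (0 : k) • fx
  rw [theta_ι_mul, mul_sub, ← mul_assoc _ _ fx, ExteriorAlgebra.ι_sq_zero]
  simp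

variable (k L) in
/-- The Chevalley–Eilenberg differential on the exterior algebra. -/
noncomputable def dCE : ExteriorAlgebra k L →ₗ[k] ExteriorAlgebra k L :=
  CliffordAlgebra.foldr' _ dAux dAux_cond 0

theorem dCE_ι_mul (a : L) (z : ExteriorAlgebra k L) :
    dCE k L (ExteriorAlgebra.ι k a * z) =
      theta (adl a) z - ExteriorAlgebra.ι k a * dCE k L z :=
  CliffordAlgebra.foldr'_ι_mul _ _ _ _ _ _

theorem dCE_one : dCE k L 1 = 0 := by
  have := CliffordAlgebra.foldr'_algebraMap (Q := (0 : QuadraticForm k L)) dAux dAux_cond 0 1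
  rw [map_one, smul_zero] at this
  exact this

theorem dCE_ι (a : L) : dCE k L (ExteriorAlgebra.ι k a) = 0 := by
  have := dCE_ι_mul (k := k) a 1
  rwa [theta_one, mul_one, dCE_one, mul_zero, sub_zero] at this

theorem dCE_theta (f : L →ₗ[k] L) (hf : ∀ a b, f ⁅a, b⁆ = ⁅f a, b⁆ + ⁅a, f b⁆)
    (z : ExteriorAlgebra k L) : dCE k L (theta f z) = theta f (dCE k L z) := by
  induction z using ext_induction with
  | one => simp [theta_one, dCE_one]
  | smul r x h => simp [h]
  | add x y hx hy => simp only [map_add, hx, hy]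
  | ι_mul a x h =>
    have := theta_comm f (adl a) (adl (f a)) (by intro b; simp [hf]) x
    simp only [theta_ι_mul, map_add, dCE_ι_mul, map_sub, h, ← this]
    abel

theorem dCE_dCE (z : ExteriorAlgebra k L) : dCE k L (dCE k L z) = 0 := by
  induction z using ext_induction with
  | one => simp [dCE_one]
  | smul r x h => simp [h]
  | add x y hx hy => simp only [map_add, hx, hy, add_zero]
  | ι_mul a x h =>
    rw [dCE_ι_mul, map_sub, dCE_ι_mul, dCE_theta _ (by intro b c; simp), h]
    simp

theorem dCE_map {M : Type*} [LieRing M] [LieAlgebra k M] (j : L →ₗ⁅k⁆ M)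
    (z : ExteriorAlgebra k L) :
    ExteriorAlgebra.map (j : L →ₗ[k] M) (dCE k L z) =
      dCE k M (ExteriorAlgebra.map (j : L →ₗ[k] M) z) := by
  induction z using ext_induction with
  | one => simp [dCE_one]
  | smul r x h => simp [h]
  | add x y hx hy => simp only [map_add, hx, hy]
  | ι_mul a x h =>
    simp only [map_sub, map_mul, ExteriorAlgebra.map_apply_ι, h, dCE_ι_mul]
    rw [theta_map (adl a) (adl (j a)) _ (by intro b; simp)]
    rfl

/-- If `p` kills all brackets, then `map p` kills the image of the differential. -/
theorem map_dCE_eq_zero (p : L →ₗ[k] V) (hp : ∀ a b : L, p ⁅a, b⁆ = 0)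
    (z : ExteriorAlgebra k L) : ExteriorAlgebra.map p (dCE k L z) = 0 := by
  induction z using ext_induction with
  | one => simp [dCE_one]
  | smul r x h => simp [h]
  | add x y hx hy => simp only [map_add, hx, hy, add_zero]
  | ι_mul a x h =>
    simp only [map_sub, map_mul, h, dCE_ι_mul]
    rw [theta_map (adl a) 0 _ (by intro b; simp [hp])]
    simp [theta_zero]

/-- Injectivity of `(z₀, z₁) ↦ j z₀ + x ∧ j z₁`. -/
theorem decomp_inj (j : V →ₗ[k] W) (r : W →ₗ[k] V) (c : W →ₗ[k] k) (x : W)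
    (hrj : ∀ a, r (j a) = a) (hrx : r x = 0) (hcj : ∀ a, c (j a) = 0) (hcx : c x = 1)
    (z₀ z₁ : ExteriorAlgebra k V)
    (h : ExteriorAlgebra.map j z₀ + ExteriorAlgebra.ι k x * ExteriorAlgebra.map j z₁ = 0) :
    z₀ = 0 ∧ z₁ = 0 := by
  have hr : ∀ z, ExteriorAlgebra.map r (ExteriorAlgebra.map j z) = z := by
    intro z
    have := ExteriorAlgebra.map_comp_map j r
    have h2 : r ∘ₗ j = LinearMap.id := by ext a; simp [hrj]
    rw [h2, ExteriorAlgebra.map_id] at this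
    exact DFunLike.congr_fun this z
  have h0 : z₀ = 0 := by
    have := congrArg (ExteriorAlgebra.map r) h
    simpa [hr, hrx] using this
  refine ⟨h0, ?_⟩
  have hc : ∀ z : ExteriorAlgebra k V,
      CliffordAlgebra.contractLeft (Q := (0 : QuadraticForm k W)) c (ExteriorAlgebra.map j z) =
        0 := by
    intro z
    induction z using ext_induction with
    | one =>
      rw [map_one]
      exact CliffordAlgebra.contractLeft_one (Q := (0 : QuadraticForm k W)) c
    | smul r x h => simp [h]
    | add x y hx hy => simp only [map_add, hx, hy, add_zero]
    | ι_mul a x h =>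
      rw [map_mul, ExteriorAlgebra.map_apply_ι]
      refine (CliffordAlgebra.contractLeft_ι_mul (Q := (0 : QuadraticForm k W)) _ _ _).trans ?_
      rw [h, hcj]; simp
  rw [h0, map_zero, zero_add] at h
  have := congrArg (CliffordAlgebra.contractLeft (Q := (0 : QuadraticForm k W)) c) h
  have h3 := (CliffordAlgebra.contractLeft_ι_mul (Q := (0 : QuadraticForm k W)) c x
    (ExteriorAlgebra.map j z₁)).symm.trans this
  rw [hc, hcx, map_zero, mul_zero, sub_zero, one_smul] at h3
  rw [← hr z₁, h3, map_zero]

end General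

set_option linter.unusedSectionVars false

section Free

variable {k : Type*} [Field k]

theorem free_induction {X : Type*} {P : FreeLieAlgebra k X → Prop}
    (of : ∀ x, P (FreeLieAlgebra.of k x)) (zero : P 0)
    (smul : ∀ (r : k) a, P a → P (r • a))
    (add : ∀ a b, P a → P b → P (a + b))
    (lie : ∀ a b, P a → P b → P ⁅a, b⁆) (a) : P a := by
  let S : LieSubalgebra k (FreeLieAlgebra k X) :=
    { carrier := {a | P a}
      add_mem' := fun {a b} ha hb => add a b ha hb
      zero_mem' := zero
      smul_mem' := fun r a ha => smul r a ha
      lie_mem' := fun {a b} ha hb => lie a b ha hb }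
  let φ : FreeLieAlgebra k X →ₗ⁅k⁆ S := FreeLieAlgebra.lift k (fun x => ⟨_, of x⟩)
  have h : S.incl.comp φ = LieHom.id := by
    ext x
    simp [φ]
  have h2 : S.incl (φ a) = a := by
    have := DFunLike.congr_fun h a
    simpa using this
  rw [← h2]
  exact (φ a).2

/-- Dual number extension of a Lie algebra. -/
structure DualLie (L : Type*) where
  /-- base -/
  fst : L
  /-- infinitesimal part -/
  snd : L

namespace DualLie

variable {L : Type*} [LieRing L] [LieAlgebra k L]

/-- underlying pair -/
def equiv : DualLie L ≃ L × L where
  toFun x := (x.fst, x.snd)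
  invFun x := ⟨x.1, x.2⟩
  left_inv _ := rfl
  right_inv _ := rfl

@[ext] theorem ext' {a b : DualLie L} (h1 : a.fst = b.fst) (h2 : a.snd = b.snd) : a = b := by
  cases a; cases b; simp_all

instance : AddCommGroup (DualLie L) := equiv.addCommGroup
instance : Module k (DualLie L) := equiv.module k

@[simp] theorem add_fst (a b : DualLie L) : (a + b).fst = a.fst + b.fst := rfl
@[simp] theorem add_snd (a b : DualLie L) : (a + b).snd = a.snd + b.snd := rfl
@[simp] theorem zero_fst : (0 : DualLie L).fst = 0 := rfl
@[simp] theorem zero_snd : (0 : DualLie L).snd = 0 := rfl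
@[simp] theorem smul_fst (r : k) (a : DualLie L) : (r • a).fst = r • a.fst := rfl
@[simp] theorem smul_snd (r : k) (a : DualLie L) : (r • a).snd = r • a.snd := rfl

instance : Bracket (DualLie L) (DualLie L) where
  bracket a b := ⟨⁅a.fst, b.fst⁆, ⁅a.fst, b.snd⁆ + ⁅a.snd, b.fst⁆⟩

@[simp] theorem lie_fst (a b : DualLie L) : ⁅a, b⁆.fst = ⁅a.fst, b.fst⁆ := rfl
@[simp] theorem lie_snd (a b : DualLie L) :
    ⁅a, b⁆.snd = ⁅a.fst, b.snd⁆ + ⁅a.snd, b.fst⁆ := rfl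

instance : LieRing (DualLie L) where
  add_lie a b c := by ext <;> simp; abel
  lie_add a b c := by ext <;> simp; abel
  lie_self a := by
    ext
    · simp
    · rw [lie_snd, ← lie_skew, neg_add_cancel]; rfl
  leibniz_lie a b c := by
    ext <;> simp
    abel

instance : LieAlgebra k (DualLie L) where
  lie_smul r a b := by ext <;> simp

end DualLie

theorem exists_derivation {X : Type*} (g : X → FreeLieAlgebra k X) :
    ∃ δ : FreeLieAlgebra k X →ₗ[k] FreeLieAlgebra k X,
      (∀ x, δ (FreeLieAlgebra.of k x) = g x) ∧ ∀ a b, δ ⁅a, b⁆ = ⁅δ a, b⁆ + ⁅a, δ b⁆ := by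
  let φ : FreeLieAlgebra k X →ₗ⁅k⁆ DualLie (FreeLieAlgebra k X) :=
    FreeLieAlgebra.lift k (fun x => ⟨FreeLieAlgebra.of k x, g x⟩)
  have hfst : ∀ a, (φ a).fst = a := by
    intro a
    induction a using free_induction with
    | of x => simp [φ]
    | zero => simp
    | smul r a h => simp [h]
    | add a b ha hb => simp [ha, hb]
    | lie a b ha hb => simp [ha, hb]
  refine ⟨{ toFun := fun a => (φ a).snd, map_add' := by simp, map_smul' := by simp }, ?_, ?_⟩
  · intro x; simp [φ]
  · intro a b
    simp [hfst, add_comm]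

/-- Semidirect product `k ⋉ L` along a derivation. -/
structure SDLie (k : Type*) [Field k] (L : Type*) [LieRing L] [LieAlgebra k L]
    (δ : L →ₗ[k] L) (hδ : ∀ a b, δ ⁅a, b⁆ = ⁅δ a, b⁆ + ⁅a, δ b⁆) where
  /-- scalar part -/
  fst : k
  /-- ideal part -/
  snd : L

namespace SDLie

variable {L : Type*} [LieRing L] [LieAlgebra k L]
  {δ : L →ₗ[k] L} {hδ : ∀ a b, δ ⁅a, b⁆ = ⁅δ a, b⁆ + ⁅a, δ b⁆}

/-- underlying pair -/
def equiv : SDLie k L δ hδ ≃ k × L where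
  toFun x := (x.fst, x.snd)
  invFun x := ⟨x.1, x.2⟩
  left_inv _ := rfl
  right_inv _ := rfl

@[ext] theorem ext' {a b : SDLie k L δ hδ} (h1 : a.fst = b.fst) (h2 : a.snd = b.snd) :
    a = b := by
  cases a; cases b; simp_all

instance : AddCommGroup (SDLie k L δ hδ) := equiv.addCommGroup
instance : Module k (SDLie k L δ hδ) := equiv.module k

@[simp] theorem add_fst (a b : SDLie k L δ hδ) : (a + b).fst = a.fst + b.fst := rfl
@[simp] theorem add_snd (a b : SDLie k L δ hδ) : (a + b).snd = a.snd + b.snd := rfl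
@[simp] theorem zero_fst : (0 : SDLie k L δ hδ).fst = 0 := rfl
@[simp] theorem zero_snd : (0 : SDLie k L δ hδ).snd = 0 := rfl
@[simp] theorem smul_fst (r : k) (a : SDLie k L δ hδ) : (r • a).fst = r * a.fst := rfl
@[simp] theorem smul_snd (r : k) (a : SDLie k L δ hδ) : (r • a).snd = r • a.snd := rfl

instance : Bracket (SDLie k L δ hδ) (SDLie k L δ hδ) where
  bracket a b := ⟨0, ⁅a.snd, b.snd⁆ + a.fst • δ b.snd - b.fst • δ a.snd⟩

@[simp] theorem lie_fst (a b : SDLie k L δ hδ) : ⁅a, b⁆.fst = 0 := rfl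
@[simp] theorem lie_snd (a b : SDLie k L δ hδ) :
    ⁅a, b⁆.snd = ⁅a.snd, b.snd⁆ + a.fst • δ b.snd - b.fst • δ a.snd := rfl

instance : LieRing (SDLie k L δ hδ) where
  add_lie a b c := by ext <;> simp [add_smul]; abel
  lie_add a b c := by ext <;> simp [add_smul]; abel
  lie_self a := by ext <;> simp
  leibniz_lie a b c := by
    ext
    · simp
    · simp only [lie_snd, lie_fst, add_snd, lie_add, lie_sub, add_lie, sub_lie, lie_smul, smul_lie,
        hδ, map_add, map_sub, map_smul, smul_add, smul_sub, zero_smul, lie_lie, smul_smul]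
      rw [← lie_skew (δ a.snd) b.snd, mul_comm c.fst, mul_comm c.fst, mul_comm b.fst a.fst]
      simp only [smul_neg]
      abel

instance : LieAlgebra k (SDLie k L δ hδ) where
  lie_smul r a b := by
    ext
    · simp
    · simp [smul_add, smul_sub, smul_smul, mul_comm]

end SDLie

/-- Letters of the free ideal obtained by eliminating `x`. -/
abbrev Elim {X : Type*} (x : X) := ℕ × {y : X // y ≠ x}

theorem elimination {X : Type*} (x : X)
    (δ : FreeLieAlgebra k (Elim x) →ₗ[k] FreeLieAlgebra k (Elim x))
    (hof : ∀ p, δ (FreeLieAlgebra.of k p) = FreeLieAlgebra.of k (p.1 + 1, p.2))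
    (hδ : ∀ a b, δ ⁅a, b⁆ = ⁅δ a, b⁆ + ⁅a, δ b⁆) :
    ∃ (j : FreeLieAlgebra k (Elim x) →ₗ⁅k⁆ FreeLieAlgebra k X)
      (r : FreeLieAlgebra k X →ₗ[k] FreeLieAlgebra k (Elim x))
      (c : FreeLieAlgebra k X →ₗ[k] k),
      (∀ y, j (FreeLieAlgebra.of k (0, y)) = FreeLieAlgebra.of k y.1) ∧
      (∀ u, j (δ u) = ⁅FreeLieAlgebra.of k x, j u⁆) ∧
      (∀ u, r (j u) = u) ∧ r (FreeLieAlgebra.of k x) = 0 ∧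
      (∀ u, c (j u) = 0) ∧ c (FreeLieAlgebra.of k x) = 1 := by
  classical
  let j : FreeLieAlgebra k (Elim x) →ₗ⁅k⁆ FreeLieAlgebra k X :=
    FreeLieAlgebra.lift k
      (fun p => (fun a => ⁅FreeLieAlgebra.of k x, a⁆)^[p.1] (FreeLieAlgebra.of k p.2.1))
  let ψ : FreeLieAlgebra k X →ₗ⁅k⁆ SDLie k (FreeLieAlgebra k (Elim x)) δ hδ :=
    FreeLieAlgebra.lift k (fun y => if h : y = x then ⟨1, 0⟩ else
      ⟨0, FreeLieAlgebra.of k (0, ⟨y, h⟩)⟩)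
  have hx : ψ (FreeLieAlgebra.of k x) = ⟨1, 0⟩ := by simp [ψ]
  have hj : ∀ i y, ψ (j (FreeLieAlgebra.of k (i, y))) = ⟨0, FreeLieAlgebra.of k (i, y)⟩ := by
    intro i y
    simp only [j, FreeLieAlgebra.lift_of_apply]
    induction i with
    | zero => simp [ψ, y.2]
    | succ i ih =>
      rw [Function.iterate_succ_apply', LieHom.map_lie, ih, hx]
      ext <;> simp [hof]
  have hψj : ∀ u, ψ (j u) = ⟨0, u⟩ := by
    intro u
    induction u using free_induction with
    | of p => exact hj p.1 p.2
    | zero => simp; rfl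
    | smul r a h => ext <;> simp [h]
    | add a b ha hb => ext <;> simp [ha, hb]
    | lie a b ha hb => ext <;> simp [ha, hb]
  refine ⟨j, { toFun := fun a => (ψ a).snd, map_add' := by simp, map_smul' := by simp },
    { toFun := fun a => (ψ a).fst, map_add' := by simp, map_smul' := by simp }, ?_, ?_, ?_, ?_,
    ?_, ?_⟩
  · intro y; simp [j]
  · intro u
    induction u using free_induction with
    | of p =>
      rw [hof]
      simp only [j, FreeLieAlgebra.lift_of_apply, Function.iterate_succ_apply']
    | zero => simp
    | smul r a h => simp [h]
    | add a b ha hb => simp [ha, hb]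
    | lie a b ha hb => simp [hδ, ha, hb]
  · intro u; simp [hψj]
  · simp [hx]
  · intro u; simp [hψj]
  · simp [hx]

/-- Abelian Lie algebra on a vector space. -/
structure AbLie (V : Type*) where
  /-- the vector -/
  val : V

namespace AbLie

variable {V : Type*} [AddCommGroup V] [Module k V]

/-- underlying vector -/
def equiv : AbLie V ≃ V where
  toFun x := x.val
  invFun x := ⟨x⟩
  left_inv _ := rfl
  right_inv _ := rfl

@[ext] theorem ext' {a b : AbLie V} (h1 : a.val = b.val) : a = b := by
  cases a; cases b; simp_all

instance : AddCommGroup (AbLie V) := equiv.addCommGroup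
instance : Module k (AbLie V) := equiv.module k

@[simp] theorem add_val (a b : AbLie V) : (a + b).val = a.val + b.val := rfl
@[simp] theorem zero_val : (0 : AbLie V).val = 0 := rfl
@[simp] theorem smul_val (r : k) (a : AbLie V) : (r • a).val = r • a.val := rfl

instance : Bracket (AbLie V) (AbLie V) where
  bracket _ _ := 0

theorem lie_eq (a b : AbLie V) : ⁅a, b⁆ = 0 := rfl

instance : LieRing (AbLie V) where
  add_lie a b c := by simp [lie_eq]
  lie_add a b c := by simp [lie_eq]
  lie_self a := by simp [lie_eq]
  leibniz_lie a b c := by simp [lie_eq]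

instance : LieAlgebra k (AbLie V) where
  lie_smul r a b := by simp [lie_eq]

end AbLie

variable (k) in
/-- abelianization -/
noncomputable def ab (X : Type*) : FreeLieAlgebra k X →ₗ[k] (X →₀ k) where
  toFun a := (FreeLieAlgebra.lift k (fun x => (⟨Finsupp.single x 1⟩ : AbLie (X →₀ k))) a).val
  map_add' := by simp
  map_smul' := by simp

@[simp] theorem ab_of {X : Type*} (x : X) :
    ab k X (FreeLieAlgebra.of k x) = Finsupp.single x 1 := by simp [ab]

theorem ab_lie {X : Type*} (a b : FreeLieAlgebra k X) : ab k X ⁅a, b⁆ = 0 := by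
  simp [ab, AbLie.lie_eq]

end Free

section Filt

variable {k : Type*} [Field k]

/-- Bracket monomials of weight `a`. -/
inductive Mon {X : Type*} (w : X → ℤ) : ℤ → FreeLieAlgebra k X → Prop
  | of (x : X) : Mon w (w x) (FreeLieAlgebra.of k x)
  | lie {a b : ℤ} {m m' : FreeLieAlgebra k X} :
      Mon w a m → Mon w b m' → Mon w (a + b) ⁅m, m'⁆

/-- Wedge monomials of degree `n` and weight `b`. -/
inductive MonE {X : Type*} (w : X → ℤ) : ℤ → ℤ → ExteriorAlgebra k (FreeLieAlgebra k X) → Prop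
  | one : MonE w 0 0 1
  | cons {a n b : ℤ} {m : FreeLieAlgebra k X} {z : ExteriorAlgebra k (FreeLieAlgebra k X)} :
      Mon w a m → MonE w n b z → MonE w (n + 1) (a + b) (ExteriorAlgebra.ι k m * z)

variable (k) in
/-- weight filtration on the free Lie algebra -/
noncomputable def FL {X : Type*} (w : X → ℤ) (N : ℤ) : Submodule k (FreeLieAlgebra k X) :=
  Submodule.span k {m | ∃ a ≤ N, Mon w a m}

variable (k) in
/-- weight filtration on the exterior algebra -/
noncomputable def FE {X : Type*} (w : X → ℤ) (n N : ℤ) :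
    Submodule k (ExteriorAlgebra k (FreeLieAlgebra k X)) :=
  Submodule.span k {z | ∃ b ≤ N, MonE w n b z}

variable {X : Type*} {w : X → ℤ}

theorem FL_mono {M N : ℤ} (h : M ≤ N) : FL k w M ≤ FL k w N :=
  Submodule.span_mono (fun _ ⟨a, ha, hm⟩ => ⟨a, ha.trans h, hm⟩)

theorem FE_mono {n M N : ℤ} (h : M ≤ N) : FE k w n M ≤ FE k w n N :=
  Submodule.span_mono (fun _ ⟨a, ha, hm⟩ => ⟨a, ha.trans h, hm⟩)

theorem Mon.mem {a : ℤ} {m : FreeLieAlgebra k X} (h : Mon w a m) : m ∈ FL k w a :=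
  Submodule.subset_span ⟨a, le_rfl, h⟩

theorem MonE.mem {n a : ℤ} {m : ExteriorAlgebra k (FreeLieAlgebra k X)} (h : MonE w n a m) :
    m ∈ FE k w n a :=
  Submodule.subset_span ⟨a, le_rfl, h⟩

theorem FL_lie {a b : ℤ} {u v : FreeLieAlgebra k X} (hu : u ∈ FL k w a) (hv : v ∈ FL k w b) :
    ⁅u, v⁆ ∈ FL k w (a + b) := by
  induction hu using Submodule.span_induction with
  | zero => simp
  | add x y _ _ hx hy => rw [add_lie]; exact add_mem hx hy
  | smul r x _ hx => rw [smul_lie]; exact Submodule.smul_mem _ _ hx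
  | mem m hm =>
    obtain ⟨a', ha', hm⟩ := hm
    induction hv using Submodule.span_induction with
    | zero => simp
    | add x y _ _ hx hy => rw [lie_add]; exact add_mem hx hy
    | smul r x _ hx => rw [lie_smul]; exact Submodule.smul_mem _ _ hx
    | mem m' hm' =>
      obtain ⟨b', hb', hm'⟩ := hm'
      exact FL_mono (add_le_add ha' hb') (Mon.lie hm hm').mem

theorem FE_cons {a n b : ℤ} {u : FreeLieAlgebra k X} {z : ExteriorAlgebra k (FreeLieAlgebra k X)}
    (hu : u ∈ FL k w a) (hv : z ∈ FE k w n b) :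
    ExteriorAlgebra.ι k u * z ∈ FE k w (n + 1) (a + b) := by
  induction hu using Submodule.span_induction with
  | zero => simp
  | add x y _ _ hx hy => rw [map_add, add_mul]; exact add_mem hx hy
  | smul r x _ hx => rw [map_smul, smul_mul_assoc]; exact Submodule.smul_mem _ _ hx
  | mem m hm =>
    obtain ⟨a', ha', hm⟩ := hm
    induction hv using Submodule.span_induction with
    | zero => simp
    | add x y _ _ hx hy => rw [mul_add]; exact add_mem hx hy
    | smul r x _ hx => rw [mul_smul_comm]; exact Submodule.smul_mem _ _ hx
    | mem m' hm' =>
      obtain ⟨b', hb', hm'⟩ := hm'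
      exact FE_mono (add_le_add ha' hb') (MonE.cons hm hm').mem

theorem theta_mem {δ : FreeLieAlgebra k X →ₗ[k] FreeLieAlgebra k X} {c : ℤ}
    (hδ : ∀ a m, Mon w a m → δ m ∈ FL k w (a + c)) {n N : ℤ}
    {z : ExteriorAlgebra k (FreeLieAlgebra k X)} (hz : z ∈ FE k w n N) :
    theta δ z ∈ FE k w n (N + c) := by
  induction hz using Submodule.span_induction with
  | zero => simp
  | add x y _ _ hx hy => rw [map_add]; exact add_mem hx hy
  | smul r x _ hx => rw [map_smul]; exact Submodule.smul_mem _ _ hx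
  | mem z hz =>
    obtain ⟨b, hb, hz⟩ := hz
    refine FE_mono (add_le_add_left hb c) ?_
    clear hb
    induction hz with
    | one => simp [theta_one]
    | @cons a n b m z hm hz ih =>
      rw [theta_ι_mul]
      refine add_mem ?_ ?_
      · have := FE_cons (hδ _ _ hm) hz.mem
        rwa [show a + c + b = a + b + c by ring] at this
      · have := FE_cons hm.mem ih
        rwa [← add_assoc] at this

theorem Mon.pos (hw : ∀ x, 1 ≤ w x) {a : ℤ} {m : FreeLieAlgebra k X} (h : Mon w a m) :
    1 ≤ a ∧ ∃ x, w x ≤ a := by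
  induction h with
  | of x => exact ⟨hw x, x, le_rfl⟩
  | lie _ _ h1 h2 =>
    obtain ⟨h1, x, hx⟩ := h1
    exact ⟨by linarith, x, by linarith⟩

theorem MonE.pos (hw : ∀ x, 1 ≤ w x) {n b : ℤ} {z : ExteriorAlgebra k (FreeLieAlgebra k X)}
    (h : MonE w n b z) : 0 ≤ b ∧ (n = 0 ∨ ∃ x, w x ≤ b) := by
  induction h with
  | one => simp
  | cons hm hz ih =>
    obtain ⟨h1, x, hx⟩ := hm.pos hw
    exact ⟨by linarith, Or.inr ⟨x, by linarith⟩⟩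

theorem MonE.deg {n b : ℤ} {z : ExteriorAlgebra k (FreeLieAlgebra k X)}
    (h : MonE w n b z) : ∃ m : ℕ, n = m ∧ z ∈ ⋀[k]^m (FreeLieAlgebra k X) := by
  induction h with
  | one => exact ⟨0, rfl, by simp⟩
  | cons hm hz ih =>
    obtain ⟨m, h1, h2⟩ := ih
    refine ⟨m + 1, by simp [h1], ?_⟩
    change _ ∈ LinearMap.range (ExteriorAlgebra.ι k) ^ (m + 1)
    rw [pow_succ']
    exact Submodule.mul_mem_mul (LinearMap.mem_range_self _ _) h2

theorem FE_le (n : ℕ) (N : ℤ) : FE k w n N ≤ ⋀[k]^n (FreeLieAlgebra k X) := by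
  refine Submodule.span_le.mpr ?_
  rintro z ⟨b, hb, hz⟩
  obtain ⟨m, h1, h2⟩ := hz.deg
  obtain rfl : n = m := by exact_mod_cast h1
  exact h2

theorem FE_bot (hw : ∀ x, 1 ≤ w x) {n N : ℤ} (hn : n ≠ 0) (hN : ¬ ∃ x, w x ≤ N)
    {z : ExteriorAlgebra k (FreeLieAlgebra k X)} (hz : z ∈ FE k w n N) : z = 0 := by
  induction hz using Submodule.span_induction with
  | zero => rfl
  | add x y _ _ hx hy => rw [hx, hy, add_zero]
  | smul r x _ hx => rw [hx, smul_zero]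
  | mem z hz =>
    obtain ⟨b, hb, hz⟩ := hz
    rcases (hz.pos hw).2 with h | ⟨x, hx⟩
    · exact absurd h hn
    · exact absurd ⟨x, hx.trans hb⟩ hN

theorem MonE.zero_eq {n b : ℤ} {z : ExteriorAlgebra k (FreeLieAlgebra k X)}
    (h : MonE w n b z) : 0 ≤ n ∧ (n = 0 → z = 1 ∧ b = 0) := by
  induction h with
  | one => simp
  | cons hm hz ih => exact ⟨by linarith [ih.1], fun h => by linarith [ih.1]⟩

theorem ab_lc (g : X →₀ k) :
    ab k X (Finsupp.linearCombination k (FreeLieAlgebra.of k) g) = g := by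
  induction g using Finsupp.induction_linear with
  | zero => simp
  | add f g hf hg => simp [hf, hg]
  | single a b => simp

/-- degree one: modulo generators, everything is a boundary, with control of weights -/
theorem deg_one {N : ℤ} {z : ExteriorAlgebra k (FreeLieAlgebra k X)} (hz : z ∈ FE k w 1 N) :
    ∃ g : X →₀ k, ∃ u ∈ FE k w 2 N,
      z = ExteriorAlgebra.ι k (Finsupp.linearCombination k (FreeLieAlgebra.of k) g) +
        dCE k _ u := by
  induction hz using Submodule.span_induction with
  | zero => exact ⟨0, 0, zero_mem _, by simp⟩
  | add x y _ _ hx hy =>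
    obtain ⟨g, u, hu, rfl⟩ := hx
    obtain ⟨g', u', hu', rfl⟩ := hy
    exact ⟨g + g', u + u', add_mem hu hu', by simp only [map_add]; abel⟩
  | smul r x _ hx =>
    obtain ⟨g, u, hu, rfl⟩ := hx
    exact ⟨r • g, r • u, Submodule.smul_mem _ _ hu, by simp only [map_smul, smul_add]⟩
  | mem z hz =>
    obtain ⟨b, hb, hz⟩ := hz
    generalize hn : (1 : ℤ) = n at hz
    cases hz with
    | one => simp at hn
    | @cons a n b m z hm hz =>
      obtain ⟨rfl, rfl⟩ := hz.zero_eq.2 (by linarith)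
      cases hm with
      | of x =>
        refine ⟨Finsupp.single x 1, 0, zero_mem _, ?_⟩
        simp
      | @lie a b m m' h1 h2 =>
        refine ⟨0, ExteriorAlgebra.ι k m * (ExteriorAlgebra.ι k m' * 1), ?_, ?_⟩
        · refine FE_mono hb ?_
          have := (MonE.cons h1 (MonE.cons h2 MonE.one)).mem
          rw [← add_assoc] at this
          exact this
        · rw [dCE_ι_mul]
          simp [dCE_ι, theta_ι]

end Filt

section Step

universe u v

variable {k : Type v} [Field k]

/-- Data of one elimination step. -/
structure Step {X : Type u} (w : X → ℤ) (x : X) (w' : Elim x → ℤ)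
    (δ : FreeLieAlgebra k (Elim x) →ₗ[k] FreeLieAlgebra k (Elim x))
    (j : FreeLieAlgebra k (Elim x) →ₗ⁅k⁆ FreeLieAlgebra k X) : Prop where
  hw' : ∀ i y, w' (i, y) = w y.1 + i * w x
  hof : ∀ p, δ (FreeLieAlgebra.of k p) = FreeLieAlgebra.of k (p.1 + 1, p.2)
  hδ : ∀ a b, δ ⁅a, b⁆ = ⁅δ a, b⁆ + ⁅a, δ b⁆
  hj : ∀ y, j (FreeLieAlgebra.of k (0, y)) = FreeLieAlgebra.of k y.1
  hjδ : ∀ u, j (δ u) = ⁅FreeLieAlgebra.of k x, j u⁆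

variable {X : Type u} {w : X → ℤ} {x : X} {w' : Elim x → ℤ}
    {δ : FreeLieAlgebra k (Elim x) →ₗ[k] FreeLieAlgebra k (Elim x)}
    {j : FreeLieAlgebra k (Elim x) →ₗ⁅k⁆ FreeLieAlgebra k X}

theorem Step.δ_mon (S : Step w x w' δ j) (a : ℤ) (m) (hm : Mon w' a m) :
    δ m ∈ FL k w' (a + w x) := by
  induction hm with
  | of p =>
    rw [S.hof]
    have := (Mon.of (k := k) (w := w') (p.1 + 1, p.2)).mem
    rw [S.hw'] at this
    rw [show p = (p.1, p.2) from rfl, S.hw']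
    have e : w p.2.1 + p.1 * w x + w x = w p.2.1 + ((p.1 + 1 : ℕ) : ℤ) * w x := by
      push_cast; ring
    rw [e]
    exact this
  | @lie a b m m' h1 h2 ih1 ih2 =>
    rw [S.hδ]
    refine add_mem ?_ ?_
    · have := FL_lie ih1 h2.mem
      rwa [show a + w x + b = a + b + w x by ring] at this
    · have := FL_lie h1.mem ih2
      rwa [← add_assoc] at this

theorem Step.δ_mem (S : Step w x w' δ j) {a : ℤ} {m} (hm : m ∈ FL k w' a) :
    δ m ∈ FL k w' (a + w x) := by
  induction hm using Submodule.span_induction with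
  | zero => simp
  | add x y _ _ hx hy => rw [map_add]; exact add_mem hx hy
  | smul r x _ hx => rw [map_smul]; exact Submodule.smul_mem _ _ hx
  | mem m hm =>
    obtain ⟨b, hb, hm⟩ := hm
    exact FL_mono (add_le_add_left hb _) (S.δ_mon _ _ hm)

theorem Step.j_mon (S : Step w x w' δ j) (a : ℤ) (m) (hm : Mon w' a m) :
    Mon w a (j m) := by
  induction hm with
  | of p =>
    obtain ⟨i, y⟩ := p
    rw [S.hw']
    induction i with
    | zero => rw [S.hj]; simpa using Mon.of y.1
    | succ i ih =>
      have := S.hof (i, y)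
      rw [← this, S.hjδ]
      have := Mon.lie (Mon.of (k := k) (w := w) x) ih
      convert this using 1
      push_cast; ring
  | lie h1 h2 ih1 ih2 => rw [LieHom.map_lie]; exact Mon.lie ih1 ih2

theorem Step.j_FL (S : Step w x w' δ j) (N : ℤ) :
    (FL k w' N).map (j : _ →ₗ[k] _) ≤ FL k w N := by
  rw [FL, Submodule.map_span_le]
  rintro m ⟨a, ha, hm⟩
  exact FL_mono ha (S.j_mon _ _ hm).mem

theorem Step.j_FE (S : Step w x w' δ j) {n N : ℤ} {z} (hz : z ∈ FE k w' n N) :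
    ExteriorAlgebra.map (j : _ →ₗ[k] _) z ∈ FE k w n N := by
  induction hz using Submodule.span_induction with
  | zero => simp
  | add x y _ _ hx hy => rw [map_add]; exact add_mem hx hy
  | smul r x _ hx => rw [map_smul]; exact Submodule.smul_mem _ _ hx
  | mem z hz =>
    obtain ⟨b, hb, hz⟩ := hz
    refine FE_mono hb ?_
    clear hb
    induction hz with
    | one => simpa using MonE.one.mem
    | cons hm hz ih =>
      rw [map_mul, ExteriorAlgebra.map_apply_ι]
      exact FE_cons (S.j_mon _ _ hm).mem ih

theorem Step.decomp_L (S : Step w x w' δ j) {a : ℤ} {m} (hm : Mon w a m) :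
    ∃ t : k, ∃ v ∈ FL k w' a, m = t • FreeLieAlgebra.of k x + j v ∧ (t = 0 ∨ w x ≤ a) := by
  induction hm with
  | of y =>
    by_cases h : y = x
    · subst h
      exact ⟨1, 0, zero_mem _, by simp, Or.inr le_rfl⟩
    · refine ⟨0, FreeLieAlgebra.of k (0, ⟨y, h⟩), ?_, by simp [S.hj], Or.inl rfl⟩
      have := (Mon.of (k := k) (w := w') (0, ⟨y, h⟩)).mem
      rw [S.hw'] at this
      simpa using this
  | @lie a b m m' h1 h2 ih1 ih2 =>
    obtain ⟨t, v, hv, rfl, ht⟩ := ih1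
    obtain ⟨t', v', hv', rfl, ht'⟩ := ih2
    refine ⟨0, t • δ v' - t' • δ v + ⁅v, v'⁆, ?_, ?_, Or.inl rfl⟩
    · refine add_mem (sub_mem ?_ ?_) (FL_lie hv hv')
      · rcases ht with rfl | ht
        · simp
        · exact Submodule.smul_mem _ _ (FL_mono (by linarith) (S.δ_mem hv'))
      · rcases ht' with rfl | ht
        · simp
        · exact Submodule.smul_mem _ _ (FL_mono (by linarith) (S.δ_mem hv))
    · simp only [zero_smul, zero_add, map_add, map_sub, map_smul, LieHom.map_lie, S.hjδ, add_lie,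
        lie_add, smul_lie, lie_smul, lie_self, smul_zero]
      rw [← lie_skew (j v), smul_neg]
      abel

theorem Step.decomp_E (S : Step w x w' δ j) {n N : ℤ} {z} (hz : z ∈ FE k w n N) :
    ∃ z₀ ∈ FE k w' n N, ∃ z₁ ∈ FE k w' (n - 1) (N - w x),
      z = ExteriorAlgebra.map (j : _ →ₗ[k] _) z₀ +
        ExteriorAlgebra.ι k (FreeLieAlgebra.of k x) *
          ExteriorAlgebra.map (j : _ →ₗ[k] _) z₁ := by
  induction hz using Submodule.span_induction with
  | zero => exact ⟨0, zero_mem _, 0, zero_mem _, by simp⟩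
  | add x y _ _ hx hy =>
    obtain ⟨z₀, h₀, z₁, h₁, rfl⟩ := hx
    obtain ⟨z₀', h₀', z₁', h₁', rfl⟩ := hy
    exact ⟨_, add_mem h₀ h₀', _, add_mem h₁ h₁', by simp only [map_add, mul_add]; abel⟩
  | smul r x _ hx =>
    obtain ⟨z₀, h₀, z₁, h₁, rfl⟩ := hx
    exact ⟨_, Submodule.smul_mem _ r h₀, _, Submodule.smul_mem _ r h₁, by
      simp only [map_smul, smul_add, mul_smul_comm]⟩
  | mem z hz =>
    obtain ⟨b, hb, hz⟩ := hz
    suffices h : ∃ z₀ ∈ FE k w' n b, ∃ z₁ ∈ FE k w' (n - 1) (b - w x),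
      z = ExteriorAlgebra.map (j : _ →ₗ[k] _) z₀ +
        ExteriorAlgebra.ι k (FreeLieAlgebra.of k x) *
          ExteriorAlgebra.map (j : _ →ₗ[k] _) z₁ by
      obtain ⟨z₀, h₀, z₁, h₁, e⟩ := h
      exact ⟨z₀, FE_mono hb h₀, z₁, FE_mono (by linarith) h₁, e⟩
    clear hb
    induction hz with
    | one => exact ⟨1, MonE.one.mem, 0, zero_mem _, by simp⟩
    | @cons a n b m z hm hz ih =>
      obtain ⟨z₀, h₀, z₁, h₁, rfl⟩ := ih
      obtain ⟨t, v, hv, rfl, ht⟩ := S.decomp_L hm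
      refine ⟨ExteriorAlgebra.ι k v * z₀, FE_cons hv h₀,
        t • z₀ - ExteriorAlgebra.ι k v * z₁, sub_mem ?_ ?_, ?_⟩
      · rw [add_sub_cancel_right]
        rcases ht with rfl | ht
        · simp
        · exact Submodule.smul_mem _ _ (FE_mono (by linarith) h₀)
      · have := FE_cons hv h₁
        rwa [show n - 1 + 1 = n + 1 - 1 by ring, ← add_sub_assoc] at this
      · have e1 := ExteriorAlgebra.ι_sq_zero (R := k) (FreeLieAlgebra.of k x)
        have e2 := eq_neg_of_add_eq_zero_left
          (ExteriorAlgebra.ι_add_mul_swap (R := k) (j v) (FreeLieAlgebra.of k x))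
        simp only [map_add, map_smul, map_sub, map_mul, ExteriorAlgebra.map_apply_ι, add_mul,
          mul_add, mul_sub, smul_mul_assoc, mul_smul_comm, LieHom.coe_toLinearMap]
        simp only [← mul_assoc, e1, e2]
        simp only [zero_mul, smul_zero, neg_mul]
        abel

theorem exact_aux (d : ℕ) : ∀ (X : Type u) (w : X → ℤ) (N n : ℤ)
    (z : ExteriorAlgebra k (FreeLieAlgebra k X)), (∀ x, 1 ≤ w x) →
    FiniteDimensional k (FL k w N) → Module.finrank k (FL k w N) < d → 2 ≤ n →
    z ∈ FE k w n N → dCE k _ z = 0 → ∃ u ∈ FE k w (n + 1) N, dCE k _ u = z := by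
  induction d with
  | zero => intro X w N n z hw _ h; simp at h
  | succ d ih =>
    intro X w N n z hw hfd hd hn hz hdz
    by_cases hN : ∃ x, w x ≤ N
    swap
    · refine ⟨0, zero_mem _, ?_⟩
      rw [FE_bot hw (by linarith) hN hz, map_zero]
    obtain ⟨x, hx⟩ := hN
    obtain ⟨δ, hof, hδ⟩ := exists_derivation (k := k)
      (fun p : Elim x => FreeLieAlgebra.of k (p.1 + 1, p.2))
    obtain ⟨j, r, c, hj, hjδ, hrj, hrx, hcj, hcx⟩ := elimination x δ hof hδ
    let w' : Elim x → ℤ := fun p => w p.2.1 + p.1 * w x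
    have S : Step w x w' δ j := ⟨fun _ _ => rfl, hof, hδ, hj, hjδ⟩
    have hw' : ∀ p, 1 ≤ w' p := by
      intro p
      have h1 := hw p.2.1
      have h2 : 0 ≤ (p.1 : ℤ) * w x := mul_nonneg (by positivity) (by linarith [hw x])
      simp only [w']; linarith
    have hjinj : Function.Injective (j : FreeLieAlgebra k (Elim x) →ₗ[k] FreeLieAlgebra k X) :=
      Function.LeftInverse.injective (g := r) hrj
    have hlt : (FL k w' N).map (j : _ →ₗ[k] _) < FL k w N := by
      refine lt_of_le_of_ne (S.j_FL N) ?_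
      intro h
      have h1 : FreeLieAlgebra.of k x ∈ FL k w N := FL_mono hx (Mon.of x).mem
      rw [← h] at h1
      obtain ⟨v, _, hv⟩ := h1
      have := hcj v
      rw [show j v = FreeLieAlgebra.of k x from hv, hcx] at this
      exact one_ne_zero this
    have hfd0 : FiniteDimensional k ((FL k w' N).map
        (j : FreeLieAlgebra k (Elim x) →ₗ[k] FreeLieAlgebra k X)) :=
      Submodule.finiteDimensional_of_le hlt.le
    let e := Submodule.equivMapOfInjective _ hjinj (FL k w' N)
    have hfd' : FiniteDimensional k (FL k w' N) := e.symm.finiteDimensional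
    have hd' : Module.finrank k (FL k w' N) < d := by
      have h1 := Submodule.finrank_lt_finrank_of_lt hlt
      have h2 := e.finrank_eq
      omega
    have hle : FL k w' (N - w x) ≤ FL k w' N := FL_mono (by linarith [hw x])
    have hfd'' : FiniteDimensional k (FL k w' (N - w x)) := Submodule.finiteDimensional_of_le hle
    have hd'' : Module.finrank k (FL k w' (N - w x)) < d :=
      (Submodule.finrank_mono hle).trans_lt hd'
    obtain ⟨z₀, h₀, z₁, h₁, rfl⟩ := S.decomp_E hz
    have hθ : ∀ z, theta (adl (k := k) (FreeLieAlgebra.of k x))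
        (ExteriorAlgebra.map (j : _ →ₗ[k] _) z) =
          ExteriorAlgebra.map (j : _ →ₗ[k] _) (theta δ z) := by
      intro z
      rw [theta_map δ (adl (FreeLieAlgebra.of k x)) _ (by intro a; exact hjδ a)]
    have key := decomp_inj (j : FreeLieAlgebra k (Elim x) →ₗ[k] FreeLieAlgebra k X) r c
      (FreeLieAlgebra.of k x) hrj hrx hcj hcx
      (dCE k _ z₀ + theta δ z₁) (- dCE k _ z₁) (by
        rw [map_add, dCE_ι_mul, hθ, ← dCE_map, ← dCE_map] at hdz
        rw [← hdz, map_add, map_neg, mul_neg]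
        abel)
    obtain ⟨k1, k2⟩ := key
    rw [neg_eq_zero] at k2
    obtain ⟨u, hu, huz⟩ : ∃ u ∈ FE k w' (n - 1 + 1) (N - w x), dCE k _ u = z₁ := by
      rcases eq_or_lt_of_le hn with hn | hn
      · subst hn
        norm_num at h₁
        obtain ⟨g, u, hu, e⟩ := deg_one h₁
        refine ⟨u, by norm_num; exact hu, ?_⟩
        have hs : ∀ a, ab k (Elim x) (δ a) =
            Finsupp.lmapDomain k k (fun p : Elim x => ((p.1 + 1, p.2) : Elim x))
              (ab k (Elim x) a) := by
          intro a
          induction a using free_induction with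
          | of p => rw [hof]; simp
          | zero => simp
          | smul r a h => simp only [map_smul, h]
          | add a b ha hb => simp only [map_add, ha, hb]
          | lie a b ha hb => simp [hδ, ab_lie]
        have h3 := congrArg (ExteriorAlgebra.map (ab k (Elim x))) k1
        rw [map_add, map_dCE_eq_zero _ ab_lie, theta_map δ _ _ hs, e, map_add,
          map_dCE_eq_zero _ ab_lie, map_zero, zero_add, add_zero, ExteriorAlgebra.map_apply_ι,
          theta_ι, ExteriorAlgebra.ι_eq_zero_iff] at h3
        rw [ab_lc] at h3
        have h5 : g = 0 := by
          refine Finsupp.mapDomain_injective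
            (f := fun p : Elim x => ((p.1 + 1, p.2) : Elim x)) ?_ (h3.trans ?_)
          · rintro ⟨i, y⟩ ⟨i', y'⟩ h
            simpa using h
          · simp
        rw [e, h5]; simp
      · exact ih _ w' (N - w x) (n - 1) z₁ hw' hfd'' hd'' (by linarith) h₁ k2
    rw [sub_add_cancel] at hu
    have hθu : theta δ u ∈ FE k w' n N := by
      have := theta_mem S.δ_mon hu
      rwa [sub_add_cancel] at this
    obtain ⟨u', hu', e'⟩ := ih _ w' N n (z₀ + theta δ u) hw' hfd' hd' hn (add_mem h₀ hθu) (by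
      rw [map_add, dCE_theta δ hδ, huz]; exact k1)
    have hA := S.j_FE hu'
    have hB := FE_cons (Mon.of (k := k) (w := w) x).mem (S.j_FE hu)
    rw [add_sub_cancel] at hB
    refine ⟨_, Submodule.sub_mem _ hA hB, ?_⟩
    · rw [map_sub, dCE_ι_mul, hθ, ← dCE_map, ← dCE_map, e', huz, map_add]
      abel

end Step

section Formula

variable {k : Type*} [Field k]

theorem theta_ιMulti {V : Type*} [AddCommGroup V] [Module k V] (f : V →ₗ[k] V) :
    ∀ (n : ℕ) (v : Fin (n + 1) → V),
      theta f (ExteriorAlgebra.ιMulti k (n + 1) v) =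
        ∑ j : Fin (n + 1), (-1 : k) ^ j.val • (ExteriorAlgebra.ι k (f (v j)) *
          ExteriorAlgebra.ιMulti k n (fun m => v (j.succAbove m))) := by
  intro n
  induction n with
  | zero =>
    intro v
    rw [ExteriorAlgebra.ιMulti_succ_apply, theta_ι_mul]
    simp [theta_one]
  | succ n ih =>
    intro v
    rw [ExteriorAlgebra.ιMulti_succ_apply, theta_ι_mul, ih, Fin.sum_univ_succ (n := n + 1)]
    congr 1
    · simp [Matrix.vecTail, Function.comp_def]
    · rw [Finset.mul_sum]
      refine Finset.sum_congr rfl fun j _ => ?_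
      rw [ExteriorAlgebra.ιMulti_succ_apply (n := n), mul_smul_comm, ← mul_assoc,
        eq_neg_of_add_eq_zero_left (ExteriorAlgebra.ι_add_mul_swap (R := k) (v 0) _)]
      simp only [Matrix.vecTail, Function.comp_def, Fin.succ_succAbove_zero,
        Fin.succ_succAbove_succ, Fin.val_succ, pow_succ, mul_neg, mul_one, neg_smul, neg_mul,
        smul_neg, mul_assoc]

theorem omit2_zero_succ {n : ℕ} (j : Fin (n + 1)) (h : (0 : Fin (n + 2)) < j.succ) (m : Fin n) :
    omit2 0 j.succ h m = (j.succAbove m).succ := by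
  simp [omit2]

theorem omit2_succ_succ_zero {n : ℕ} (i j : Fin (n + 2)) (h : i.succ < j.succ) :
    omit2 (n := n + 1) i.succ j.succ h 0 = 0 := by
  have : (i.succ.castLT ((Fin.lt_def.mp h).trans_le (Nat.lt_succ_iff.mp j.succ.isLt))) =
    (i.castLT ((Fin.lt_def.mp (Fin.succ_lt_succ_iff.mp h)).trans_le
      (Nat.lt_succ_iff.mp j.isLt))).succ := rfl
  simp [omit2, this]

theorem omit2_succ_succ_succ {n : ℕ} (i j : Fin (n + 2)) (h : i.succ < j.succ) (m : Fin n) :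
    omit2 (n := n + 1) i.succ j.succ h m.succ =
      (omit2 i j (Fin.succ_lt_succ_iff.mp h) m).succ := by
  have : (i.succ.castLT ((Fin.lt_def.mp h).trans_le (Nat.lt_succ_iff.mp j.succ.isLt))) =
    (i.castLT ((Fin.lt_def.mp (Fin.succ_lt_succ_iff.mp h)).trans_le
      (Nat.lt_succ_iff.mp j.isLt))).succ := rfl
  simp [omit2, this]

theorem dCE_ιMulti {L : Type*} [LieRing L] [LieAlgebra k L] :
    ∀ (n : ℕ) (l : Fin (n + 2) → L),
      dCE k L (ExteriorAlgebra.ιMulti k (n + 2) l) =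
        ∑ i : Fin (n + 2), ∑ j : Fin (n + 2),
          if h : i < j then
            ((-1 : k) ^ (i.val + j.val + 1)) •
              (ExteriorAlgebra.ι k ⁅l i, l j⁆ *
                ExteriorAlgebra.ιMulti k n (fun m => l (omit2 i j h m)))
          else 0 := by
  intro n
  induction n with
  | zero =>
    intro l
    rw [ExteriorAlgebra.ιMulti_succ_apply, dCE_ι_mul, theta_ιMulti,
      ExteriorAlgebra.ιMulti_succ_apply]
    simp [dCE_ι, Fin.sum_univ_succ, Matrix.vecTail]
  | succ n ih =>
    intro l
    rw [ExteriorAlgebra.ιMulti_succ_apply, dCE_ι_mul, theta_ιMulti, ih, Fin.sum_univ_succ (n := n + 2),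
      sub_eq_add_neg]
    congr 1
    · rw [Fin.sum_univ_succ (n := n + 2)]
      simp only [lt_irrefl, dite_false, zero_add, Fin.succ_pos, dite_true, omit2_zero_succ]
      refine Finset.sum_congr rfl fun j _ => ?_
      simp [Matrix.vecTail, Function.comp_def, pow_succ]
    · rw [Finset.mul_sum, ← Finset.sum_neg_distrib]
      refine Finset.sum_congr rfl fun i _ => ?_
      rw [Fin.sum_univ_succ (n := n + 2), dif_neg (by simp), zero_add, Finset.mul_sum,
        ← Finset.sum_neg_distrib]
      refine Finset.sum_congr rfl fun j _ => ?_
      by_cases h : i < j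
      · rw [dif_pos h, dif_pos (Fin.succ_lt_succ_iff.mpr h),
          ExteriorAlgebra.ιMulti_succ_apply (n := n), mul_smul_comm, ← mul_assoc,
          eq_neg_of_add_eq_zero_left (ExteriorAlgebra.ι_add_mul_swap (R := k) (l 0) _)]
        simp only [omit2_succ_succ_zero, Matrix.vecTail, Function.comp_def, omit2_succ_succ_succ]
        rw [neg_mul, smul_neg, neg_neg, mul_assoc]
        congr 1
        simp only [Fin.val_succ]
        ring
      · rw [dif_neg h, dif_neg (by simpa using h)]; simp

theorem coe_D {L : Type*} [LieRing L] [LieAlgebra k L]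
    (D : (n : ℕ) → (⋀[k]^(n+1) L →ₗ[k] ⋀[k]^n L)) (hD : IsCEDiff k L D) (n : ℕ)
    (z : ⋀[k]^(n+1) L) : (D n z : ExteriorAlgebra k L) = dCE k L z := by
  have h : (⋀[k]^n L).subtype ∘ₗ D n = dCE k L ∘ₗ (⋀[k]^(n+1) L).subtype := by
    refine exteriorPower.linearMap_ext ?_
    ext l
    change ((D n (wedge k (n + 1) l) : ⋀[k]^n L) : ExteriorAlgebra k L) =
      dCE k L (ExteriorAlgebra.ιMulti k (n + 1) l)
    cases n with
    | zero =>
      rw [hD.1, ExteriorAlgebra.ιMulti_succ_apply]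
      simp [dCE_ι]
    | succ n =>
      rw [hD.2, dCE_ιMulti, Submodule.coe_sum]
      refine Finset.sum_congr rfl fun i _ => ?_
      rw [Submodule.coe_sum]
      refine Finset.sum_congr rfl fun j _ => ?_
      split_ifs with h
      · rw [Submodule.coe_smul]
        congr 1
        change ExteriorAlgebra.ιMulti k (n + 1) _ = _
        rw [ExteriorAlgebra.ιMulti_succ_apply]
        rfl
      · rfl
  exact LinearMap.congr_fun h z

end Formula

section Exhaust

variable {k : Type*} [Field k] {X : Type*}

theorem exh_L (a : FreeLieAlgebra k X) : ∃ (S : Finset X) (N : ℤ), 0 ≤ N ∧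
    ∀ w : X → ℤ, (∀ x ∈ S, w x = 1) → a ∈ FL k w N := by
  classical
  induction a using free_induction with
  | of x =>
    refine ⟨{x}, 1, by norm_num, fun w hw => ?_⟩
    have := (Mon.of (k := k) (w := w) x).mem
    rwa [hw x (by simp)] at this
  | zero => exact ⟨∅, 0, le_rfl, fun w _ => zero_mem _⟩
  | smul r a h =>
    obtain ⟨S, N, hN, h⟩ := h
    exact ⟨S, N, hN, fun w hw => Submodule.smul_mem _ _ (h w hw)⟩
  | add a b ha hb =>
    obtain ⟨S, N, hN, h⟩ := ha
    obtain ⟨S', N', hN', h'⟩ := hb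
    refine ⟨S ∪ S', N + N', by linarith, fun w hw => add_mem ?_ ?_⟩
    · exact FL_mono (by linarith) (h w fun x hx => hw x (by simp [hx]))
    · exact FL_mono (by linarith) (h' w fun x hx => hw x (by simp [hx]))
  | lie a b ha hb =>
    obtain ⟨S, N, hN, h⟩ := ha
    obtain ⟨S', N', hN', h'⟩ := hb
    refine ⟨S ∪ S', N + N', by linarith, fun w hw => FL_lie ?_ ?_⟩
    · exact (h w fun x hx => hw x (by simp [hx]))
    · exact (h' w fun x hx => hw x (by simp [hx]))

theorem exh_ιMulti (n : ℕ) : ∀ v : Fin n → FreeLieAlgebra k X,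
    ∃ (S : Finset X) (N : ℤ), 0 ≤ N ∧
    ∀ w : X → ℤ, (∀ x ∈ S, w x = 1) → ExteriorAlgebra.ιMulti k n v ∈ FE k w n N := by
  classical
  induction n with
  | zero =>
    intro v
    refine ⟨∅, 0, le_rfl, fun w _ => ?_⟩
    rw [ExteriorAlgebra.ιMulti_zero_apply]
    exact MonE.one.mem
  | succ n ih =>
    intro v
    obtain ⟨S, N, hN, h⟩ := exh_L (v 0)
    obtain ⟨S', N', hN', h'⟩ := ih (Matrix.vecTail v)
    refine ⟨S ∪ S', N + N', by linarith, fun w hw => ?_⟩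
    rw [ExteriorAlgebra.ιMulti_succ_apply]
    push_cast
    refine FE_cons ?_ ?_
    · exact (h w fun x hx => hw x (by simp [hx]))
    · exact (h' w fun x hx => hw x (by simp [hx]))

theorem exh_E (n : ℕ) (z : ExteriorAlgebra k (FreeLieAlgebra k X))
    (hz : z ∈ ⋀[k]^n (FreeLieAlgebra k X)) : ∃ (S : Finset X) (N : ℤ), 0 ≤ N ∧
    ∀ w : X → ℤ, (∀ x ∈ S, w x = 1) → z ∈ FE k w n N := by
  classical
  rw [← ExteriorAlgebra.ιMulti_span_fixedDegree] at hz
  induction hz using Submodule.span_induction with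
  | mem z hz => obtain ⟨v, rfl⟩ := hz; exact exh_ιMulti n v
  | zero => exact ⟨∅, 0, le_rfl, fun w _ => zero_mem _⟩
  | smul r a _ h =>
    obtain ⟨S, N, hN, h⟩ := h
    exact ⟨S, N, hN, fun w hw => Submodule.smul_mem _ _ (h w hw)⟩
  | add a b _ _ ha hb =>
    obtain ⟨S, N, hN, h⟩ := ha
    obtain ⟨S', N', hN', h'⟩ := hb
    refine ⟨S ∪ S', N + N', by linarith, fun w hw => add_mem ?_ ?_⟩
    · exact FE_mono (by linarith) (h w fun x hx => hw x (by simp [hx]))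
    · exact FE_mono (by linarith) (h' w fun x hx => hw x (by simp [hx]))

theorem FL_fg {w : X → ℤ} (hw : ∀ x, 1 ≤ w x) (S : Finset X) (N : ℤ)
    (hS : ∀ x, w x ≤ N → x ∈ S) (M : ℕ) : (M : ℤ) ≤ N → (FL k w M).FG := by
  classical
  induction M with
  | zero =>
    intro _
    have : FL k w ((0 : ℕ) : ℤ) = ⊥ := by
      rw [eq_bot_iff]
      refine Submodule.span_le.mpr ?_
      rintro m ⟨a, ha, hm⟩
      have := (hm.pos hw).1
      push_cast at ha
      linarith
    rw [this]
    exact Submodule.fg_bot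
  | succ M ih =>
    intro hM
    have hM' : (M : ℤ) ≤ N := by push_cast at hM; linarith
    let B : FreeLieAlgebra k X →ₗ[k] FreeLieAlgebra k X →ₗ[k] FreeLieAlgebra k X :=
      LinearMap.mk₂ k (fun a b => ⁅a, b⁆) (by simp) (by simp) (by simp) (by simp)
    let T := Submodule.span k (S.image (FreeLieAlgebra.of k) : Set (FreeLieAlgebra k X)) ⊔
      Submodule.map₂ B (FL k w M) (FL k w M)
    have hT : T.FG := (Submodule.fg_span (Finset.finite_toSet _)).sup ((ih hM').map₂ B (ih hM'))
    have hle : FL k w ((M + 1 : ℕ) : ℤ) ≤ T := by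
      refine Submodule.span_le.mpr ?_
      rintro m ⟨a, ha, hm⟩
      push_cast at ha hM
      cases hm with
      | of x =>
        refine Submodule.mem_sup_left (Submodule.subset_span ?_)
        exact Finset.mem_coe.mpr (Finset.mem_image_of_mem _ (hS x (by linarith)))
      | @lie a b m m' h1 h2 =>
        have p1 := (h1.pos hw).1
        have p2 := (h2.pos hw).1
        refine Submodule.mem_sup_right ?_
        exact Submodule.apply_mem_map₂ B (FL_mono (by linarith) h1.mem)
          (FL_mono (by linarith) h2.mem)
    have : FiniteDimensional k T := Module.Finite.iff_fg.mpr hT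
    have := Submodule.finiteDimensional_of_le hle
    exact Module.Finite.iff_fg.mp this

/-- A good weight for a given element. -/
theorem exists_weight (n : ℕ) (z : ExteriorAlgebra k (FreeLieAlgebra k X))
    (hz : z ∈ ⋀[k]^n (FreeLieAlgebra k X)) : ∃ (w : X → ℤ) (N : ℤ), (∀ x, 1 ≤ w x) ∧
      FiniteDimensional k (FL k w N) ∧ z ∈ FE k w n N := by
  classical
  obtain ⟨S, N, hN, h⟩ := exh_E n z hz
  let w : X → ℤ := fun x => if x ∈ S then 1 else N + 1
  have hw : ∀ x, 1 ≤ w x := by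
    intro x
    simp only [w]
    split_ifs <;> linarith
  refine ⟨w, N, hw, ?_, h w fun x hx => by simp [w, hx]⟩
  have := FL_fg (k := k) hw S N (by
    intro x hx
    by_contra hc
    simp [w, hc] at hx) N.toNat (by rw [Int.toNat_of_nonneg hN])
  rw [Int.toNat_of_nonneg hN] at this
  exact Module.Finite.iff_fg.mpr this

end Exhaust

end CEFree

/-- The Chevalley–Eilenberg homology of the free Lie algebra on `X`, with trivial
coefficients, vanishes in degrees `≥ 2` (`ker d_n = range d_{n+1}` for `n ≥ 2`, i.e.
`ker (D n) = range (D (n+1))` for `n ≥ 1`), and in degree 1 it is the free `k`-vector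
space on `X`, via `x ↦ class of (of x)`. -/
theorem chevalleyEilenberg_homology_freeLieAlgebra
    (k : Type*) [Field k] [CharZero k] (X : Type*)
    (D : (n : ℕ) → (⋀[k]^(n+1) (FreeLieAlgebra k X) →ₗ[k] ⋀[k]^n (FreeLieAlgebra k X)))
    (hD : IsCEDiff k (FreeLieAlgebra k X) D) :
    (∀ n : ℕ, 1 ≤ n → LinearMap.ker (D n) = LinearMap.range (D (n + 1))) ∧
    (∃ e : (X →₀ k) ≃ₗ[k]
        (⋀[k]^1 (FreeLieAlgebra k X) ⧸ LinearMap.range (D 1)),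
      ∀ x : X,
        e (Finsupp.single x 1) =
          Submodule.Quotient.mk (wedge k 1 (fun _ => FreeLieAlgebra.of k x))) := by
  constructor
  · intro n hn
    ext z
    rw [LinearMap.mem_ker, LinearMap.mem_range]
    constructor
    · intro hz
      have hdz : CEFree.dCE k _ (z : ExteriorAlgebra k (FreeLieAlgebra k X)) = 0 := by
        rw [← CEFree.coe_D D hD, hz]; rfl
      obtain ⟨w, N, hw, hfd, hzN⟩ := CEFree.exists_weight (n + 1) z.1 z.2
      obtain ⟨u, hu, huz⟩ := CEFree.exact_aux _ X w N _ z.1 hw hfd (Nat.lt_succ_self _)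
        (by push_cast; have : (1 : ℤ) ≤ n := by exact_mod_cast hn
            linarith) hzN hdz
      have hu' : u ∈ ⋀[k]^(n + 1 + 1) (FreeLieAlgebra k X) :=
        CEFree.FE_le (n + 1 + 1) N (by exact_mod_cast hu)
      refine ⟨⟨u, hu'⟩, Subtype.ext ?_⟩
      rw [CEFree.coe_D D hD]
      exact huz
    · rintro ⟨u, rfl⟩
      apply Subtype.ext
      rw [CEFree.coe_D D hD, CEFree.coe_D D hD, CEFree.dCE_dCE]
      rfl
  · let T : FreeLieAlgebra k X →ₗ[k] ⋀[k]^1 (FreeLieAlgebra k X) :=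
      (ExteriorAlgebra.ι k).codRestrict _ (fun a => by
        change _ ∈ LinearMap.range (ExteriorAlgebra.ι k) ^ 1
        rw [pow_one]
        exact LinearMap.mem_range_self _ _)
    let φ : (X →₀ k) →ₗ[k] (⋀[k]^1 (FreeLieAlgebra k X) ⧸ LinearMap.range (D 1)) :=
      (LinearMap.range (D 1)).mkQ ∘ₗ T ∘ₗ Finsupp.linearCombination k (FreeLieAlgebra.of k)
    have hφ : Function.Bijective φ := by
      constructor
      · rw [← LinearMap.ker_eq_bot, LinearMap.ker_eq_bot']
        intro g hg
        have hg' : T (Finsupp.linearCombination k (FreeLieAlgebra.of k) g) ∈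
            LinearMap.range (D 1) := (Submodule.Quotient.mk_eq_zero _).mp hg
        obtain ⟨u, hu⟩ := hg'
        have h1 := congrArg Subtype.val hu
        rw [CEFree.coe_D D hD] at h1
        have h2 := congrArg (ExteriorAlgebra.map (CEFree.ab k X)) h1
        rw [CEFree.map_dCE_eq_zero _ CEFree.ab_lie] at h2
        have h3 := h2.trans (ExteriorAlgebra.map_apply_ι _ _)
        rw [CEFree.ab_lc] at h3
        exact (ExteriorAlgebra.ι_eq_zero_iff _).mp h3.symm
      · intro q
        obtain ⟨z, rfl⟩ := Submodule.Quotient.mk_surjective _ q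
        obtain ⟨w, N, hw, hfd, hzN⟩ := CEFree.exists_weight 1 z.1 z.2
        obtain ⟨g, u, hu, e⟩ := CEFree.deg_one (by exact_mod_cast hzN)
        have hu' : u ∈ ⋀[k]^(1 + 1) (FreeLieAlgebra k X) :=
          CEFree.FE_le (1 + 1) N (by exact_mod_cast hu)
        refine ⟨g, ?_⟩
        refine ((Submodule.Quotient.eq _).mpr ⟨-⟨u, hu'⟩, ?_⟩)
        apply Subtype.ext
        rw [CEFree.coe_D D hD, Submodule.coe_sub, e]
        simp [T]
    refine ⟨LinearEquiv.ofBijective φ hφ, fun x => ?_⟩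
    have hw : T (FreeLieAlgebra.of k x) = wedge k 1 (fun _ => FreeLieAlgebra.of k x) := by
      apply Subtype.ext
      change ExteriorAlgebra.ι k _ = ExteriorAlgebra.ιMulti k 1 _
      rw [ExteriorAlgebra.ιMulti_succ_apply]
      simp
    rw [← hw]
    simp [φ]
end

section
/- Let k be a field of characteristic 0, X a type, and W a k-vector space. Let C₀ be the non-unital subalgebra of the polynomial algebra MvPolynomial X k generated by the variables (the polynomials with zero constant term), let T̄(W) be the non-unital subalgebra of TensorAlgebra k W generated by the canonical image ι(W), and let A₀ := (MvPolynomial X k) ⊗ T̄(W) with the componentwise multiplication (u ⊗ v)·(u' ⊗ v') = (u·u') ⊗ (v·v'), and define ρ₀ : C₀ ⊗ A₀ → A₀ by ρ₀(c, u ⊗ v) = (c·u) ⊗ v. Then: (1) C₀ is a commutative non-unital k-algebra, A₀ is an associative non-unital k-algebra, and ρ₀ satisfies ρ₀(c·c', a) = ρ₀(c, ρ₀(c', a)) = ρ₀(c', ρ₀(c, a)) and ρ₀(c, a·a') = ρ₀(c, a)·a' = a·ρ₀(c, a'); (2) the triple (C₀, A₀, ρ₀) is the free such structure generated by (X, W):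 for every triple (C, A, ρ) where C is a commutative non-unital k-algebra, A an associative non-unital k-algebra, and ρ : C ⊗ A → A a k-linear map satisfying ρ(cc', a) = ρ(c, ρ(c', a)) = ρ(c', ρ(c, a)) and ρ(c, aa') = ρ(c, a)a' = aρ(c, a'), and for every map φ : X → C and k-linear map ψ : W → A, there exist a unique non-unital k-algebra homomorphism F : C₀ → C with F(x) = φ(x) on each variable x ∈ X, and a unique non-unital k-algebra homomorphism G : A₀ → A with G(1 ⊗ ι(w)) = ψ(w) for all w ∈ W and G(ρ₀(c, a)) = ρ(F(c), G(a)) for all c ∈ C₀, a ∈ A₀. -/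
/-!
STATEMENT 7: the free `H₀(SC^vor)`-algebra generated by `(X, W)`: closed part the free
non-unital commutative algebra `S(V_c)` (polynomials with zero constant term), open part
`S⁺(V_c) ⊗ T(V_o) = (MvPolynomial X k) ⊗ T̄(W)` with componentwise multiplication, and
structure map `ρ₀(c, u ⊗ v) = (c·u) ⊗ v`.
-/

open scoped TensorProduct

set_option synthInstance.maxHeartbeats 1000000
set_option maxHeartbeats 1000000

/-- The free non-unital commutative algebra on `X`: the non-unital subalgebra of
`MvPolynomial X k` generated by the variables (= polynomials with zero constant term). -/
noncomputable def freeNonUnitalComm (k : Type*) [Field k] (X : Type*) :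
    NonUnitalSubalgebra k (MvPolynomial X k) :=
  NonUnitalAlgebra.adjoin k (Set.range (MvPolynomial.X : X → MvPolynomial X k))

/-- The variable `x`, as an element of the free non-unital commutative algebra. -/
noncomputable def varC (k : Type*) [Field k] {X : Type*} (x : X) : freeNonUnitalComm k X :=
  ⟨MvPolynomial.X x, NonUnitalAlgebra.subset_adjoin k (Set.mem_range_self x)⟩

/-- The free non-unital associative algebra `T(W) = ⊕_{n≥1} W^{⊗n}`: the non-unital
subalgebra of the tensor algebra on `W` generated by the canonical image of `W`. -/
noncomputable def freeNonUnitalAssoc (k : Type*) [Field k]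
    (W : Type*) [AddCommGroup W] [Module k W] : NonUnitalSubalgebra k (TensorAlgebra k W) :=
  NonUnitalAlgebra.adjoin k (Set.range (TensorAlgebra.ι k))

/-- The canonical map `W → T(W)`. -/
noncomputable def iotaW (k : Type*) [Field k] {W : Type*} [AddCommGroup W] [Module k W]
    (w : W) : freeNonUnitalAssoc k W :=
  ⟨TensorAlgebra.ι k w, NonUnitalAlgebra.subset_adjoin k (Set.mem_range_self w)⟩

/-- The open part of the free `H₀(SC^vor)`-algebra on `(X, W)`:
`S⁺(V_c) ⊗ T(V_o) = (MvPolynomial X k) ⊗ T̄(W)`, with componentwise multiplication. -/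
noncomputable abbrev freeSCVorOpen (k : Type*) [Field k] (X : Type*)
    (W : Type*) [AddCommGroup W] [Module k W] :=
  MvPolynomial X k ⊗[k] (freeNonUnitalAssoc k W)

/-- The defining formula of the structure map of the free `H₀(SC^vor)`-algebra:
`ρ₀(c ⊗ (u ⊗ v)) = (c·u) ⊗ v`. -/
def IsFreeSCVorAction (k : Type*) [Field k] (X : Type*)
    (W : Type*) [AddCommGroup W] [Module k W]
    (ρ₀ : (freeNonUnitalComm k X) ⊗[k] (freeSCVorOpen k X W) →ₗ[k] freeSCVorOpen k X W) :
    Prop :=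
  ∀ (c : freeNonUnitalComm k X) (u : MvPolynomial X k) (v : freeNonUnitalAssoc k W),
    ρ₀ (c ⊗ₜ[k] (u ⊗ₜ[k] v)) = ((c : MvPolynomial X k) * u) ⊗ₜ[k] v

section Helpers

variable {k : Type*} [Field k]

/-- An algebra map to a unitization sending generators into the ideal restricts to the
generated non-unital subalgebra. -/
theorem exists_restrict_unitization {B : Type*} [Ring B] [Algebra k B] (s : Set B)
    {C : Type*} [NonUnitalRing C] [Module k C] [SMulCommClass k C C] [IsScalarTower k C C]
    (f : B →ₐ[k] Unitization k C) (hf : ∀ b ∈ s, (f b).fst = 0) :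
    ∃ F : NonUnitalAlgebra.adjoin k s →ₙₐ[k] C,
      ∀ b : NonUnitalAlgebra.adjoin k s, f (b : B) = Unitization.inr (F b) := by
  have h0 : ∀ b ∈ NonUnitalAlgebra.adjoin k s, (f b).fst = 0 := by
    intro b hb
    induction hb using NonUnitalAlgebra.adjoin_induction with
    | mem x hx => exact hf x hx
    | add x y _ _ hx hy => simp [hx, hy]
    | zero => simp
    | mul x y _ _ hx hy => simp [hx, hy]
    | smul r x _ hx => simp [hx]
  refine ⟨{ toFun := fun b => (f (b : B)).snd
            map_smul' := ?_, map_zero' := ?_, map_add' := ?_, map_mul' := ?_ }, ?_⟩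
  · intro r x; simp
  · simp
  · intro x y; simp
  · intro x y; simp [h0 x x.2, h0 y y.2]
  · intro b
    ext
    · simpa using h0 b b.2
    · simp

/-- Non-unital algebra maps out of a generated subalgebra are determined on generators. -/
theorem nonUnital_adjoin_hom_ext {B : Type*} [Ring B] [Algebra k B] (s : Set B)
    {C : Type*} [NonUnitalRing C] [Module k C]
    (F G : NonUnitalAlgebra.adjoin k s →ₙₐ[k] C)
    (h : ∀ b (hb : b ∈ s), F ⟨b, NonUnitalAlgebra.subset_adjoin k hb⟩ =
      G ⟨b, NonUnitalAlgebra.subset_adjoin k hb⟩) : F = G := by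
  ext ⟨b, hb⟩
  induction hb using NonUnitalAlgebra.adjoin_induction with
  | mem x hx => exact h x hx
  | add x y hx' hy' hx hy =>
    have := congrArg₂ (· + ·) hx hy
    simp only [← map_add] at this
    exact this
  | zero => exact (map_zero F).trans (map_zero G).symm
  | mul x y hx' hy' hx hy =>
    have := congrArg₂ (· * ·) hx hy
    simp only [← map_mul] at this
    exact this
  | smul r x hx' hx =>
    have := congrArg (r • ·) hx
    simp only [← map_smul] at this
    exact this

variable {X : Type*} {W : Type*} [AddCommGroup W] [Module k W]

theorem free_part_two
    (ρ₀ : (freeNonUnitalComm k X) ⊗[k] (freeSCVorOpen k X W) →ₗ[k] freeSCVorOpen k X W)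
    (h₀ : IsFreeSCVorAction k X W ρ₀)
    (C : Type*) [NonUnitalCommRing C] [Module k C]
    [SMulCommClass k C C] [IsScalarTower k C C]
    (A : Type*) [NonUnitalRing A] [Module k A]
    [SMulCommClass k A A] [IsScalarTower k A A]
    (ρ : C ⊗[k] A →ₗ[k] A)
    (h1 : ∀ (c c' : C) (a : A), ρ ((c * c') ⊗ₜ[k] a) = ρ (c ⊗ₜ[k] ρ (c' ⊗ₜ[k] a)))
    (h2 : ∀ (c : C) (a a' : A), ρ (c ⊗ₜ[k] (a * a')) = ρ (c ⊗ₜ[k] a) * a')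
    (h3 : ∀ (c : C) (a a' : A), ρ (c ⊗ₜ[k] (a * a')) = a * ρ (c ⊗ₜ[k] a'))
    (φ : X → C) (ψ : W →ₗ[k] A) :
    ∃! F : freeNonUnitalComm k X →ₙₐ[k] C,
      (∀ x : X, F (varC k x) = φ x) ∧
      ∃! G : freeSCVorOpen k X W →ₙₐ[k] A,
        (∀ w : W, G ((1 : MvPolynomial X k) ⊗ₜ[k] iotaW k w) = ψ w) ∧
        (∀ (c : freeNonUnitalComm k X) (a : freeSCVorOpen k X W),
          G (ρ₀ (c ⊗ₜ[k] a)) = ρ (F c ⊗ₜ[k] G a)) := by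
  let f : MvPolynomial X k →ₐ[k] Unitization k C :=
    MvPolynomial.aeval (fun x => Unitization.inr (φ x))
  obtain ⟨F, hF⟩ : ∃ F : freeNonUnitalComm k X →ₙₐ[k] C,
      ∀ b : freeNonUnitalComm k X, f (b : MvPolynomial X k) = Unitization.inr (F b) := exists_restrict_unitization
    (Set.range (MvPolynomial.X : X → MvPolynomial X k)) f (by rintro _ ⟨x, rfl⟩; simp [f])
  let g : TensorAlgebra k W →ₐ[k] Unitization k A :=
    TensorAlgebra.lift k ((Unitization.inrHom k k A).comp ψ)
  obtain ⟨θ, hθ⟩ : ∃ F : freeNonUnitalAssoc k W →ₙₐ[k] A,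
      ∀ b : freeNonUnitalAssoc k W, g (b : TensorAlgebra k W) = Unitization.inr (F b) := exists_restrict_unitization
    (Set.range (TensorAlgebra.ι k : W →ₗ[k] TensorAlgebra k W)) g
    (by rintro _ ⟨x, rfl⟩; simp [g])
  have hFX : ∀ x, F (varC k x) = φ x := by
    intro x
    have := hF (varC k x)
    apply Unitization.inr_injective (R := k)
    rw [← this]
    simp [f, varC]
  have hθW : ∀ w, θ (iotaW k w) = ψ w := by
    intro w
    have := hθ (iotaW k w)
    apply Unitization.inr_injective (R := k)
    rw [← this]
    simp [g, iotaW]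
  let r : C →ₙₐ[k] Module.End k A :=
    { toFun := fun c => TensorProduct.curry ρ c
      map_smul' := by intro m x; simp
      map_zero' := by simp
      map_add' := by intro x y; simp
      map_mul' := by intro x y; ext a; simp [h1] }
  have hr : ∀ c a, r c a = ρ (c ⊗ₜ[k] a) := fun c a => rfl
  let α : MvPolynomial X k →ₐ[k] Module.End k A := (Unitization.lift r).comp f
  have hα : ∀ u a, α u a = (f u).fst • a + ρ ((f u).snd ⊗ₜ[k] a) := by
    intro u a
    change ((algebraMap k (Module.End k A) (f u).fst) + r (f u).snd) a = _
    rw [LinearMap.add_apply, hr]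
    rfl
  have hαl : ∀ u a b, α u (a * b) = α u a * b := by
    intro u a b
    rw [hα, hα, h2, add_mul, smul_mul_assoc]
  have hαr : ∀ u a b, α u (a * b) = a * α u b := by
    intro u a b
    rw [hα, hα, h3, mul_add, mul_smul_comm]
  let L : freeSCVorOpen k X W →ₗ[k] A :=
    TensorProduct.lift (α.toLinearMap.compl₂ (θ : _ →ₗ[k] A))
  have hL : ∀ u v, L (u ⊗ₜ[k] v) = α u (θ v) := fun u v => rfl
  have hLmul : ∀ a b, L (a * b) = L a * L b := by
    intro a b
    induction a using TensorProduct.induction_on with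
    | zero => simp
    | add x y hx hy => rw [add_mul, map_add, hx, hy, map_add, add_mul]
    | tmul u v =>
      induction b using TensorProduct.induction_on with
      | zero => simp
      | add x y hx hy => rw [mul_add, map_add, hx, hy, map_add, mul_add]
      | tmul u' v' =>
        rw [Algebra.TensorProduct.tmul_mul_tmul, hL, hL, hL, map_mul, map_mul,
          Module.End.mul_apply, hαr, hαl]
  let G : freeSCVorOpen k X W →ₙₐ[k] A :=
    { toFun := L
      map_smul' := fun m x => map_smul L m x
      map_zero' := map_zero L
      map_add' := map_add L
      map_mul' := hLmul }
  have hG : ∀ u v, G (u ⊗ₜ[k] v) = α u (θ v) := fun u v => rfl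
  refine ⟨F, ⟨hFX, G, ⟨?_, ?_⟩, ?_⟩, ?_⟩
  · intro w
    rw [hG, map_one, hθW]; rfl
  · intro c a
    induction a using TensorProduct.induction_on with
    | zero => simp
    | add x y hx hy => simp only [TensorProduct.tmul_add, map_add, hx, hy]
    | tmul u v =>
      rw [h₀, hG, hG, map_mul, Module.End.mul_apply, hα (c : MvPolynomial X k), hF c]
      simp
  · rintro G' ⟨hG'1, hG'2⟩
    have key : ∀ u v, G' (u ⊗ₜ[k] v) = α u (θ v) := by
      intro u v
      induction u using MvPolynomial.induction_on with
      | C a =>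
        let G₁ : freeNonUnitalAssoc k W →ₙₐ[k] A :=
          { toFun := fun v => G' ((1 : MvPolynomial X k) ⊗ₜ[k] v)
            map_smul' := by intro m x; simp
            map_zero' := by simp
            map_add' := by intro x y; simp [TensorProduct.tmul_add]
            map_mul' := by
              intro x y
              rw [← map_mul, Algebra.TensorProduct.tmul_mul_tmul, one_mul] }
        have hG₁ : G₁ = θ := by
          apply nonUnital_adjoin_hom_ext
          rintro _ ⟨w, rfl⟩
          exact (hG'1 w).trans (hθW w).symm
        have h : G' ((1 : MvPolynomial X k) ⊗ₜ[k] v) = θ v := by rw [← hG₁]; rfl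
        have hc : (MvPolynomial.C a : MvPolynomial X k) = a • 1 := by
          rw [MvPolynomial.smul_eq_C_mul, mul_one]
        rw [hc, ← TensorProduct.smul_tmul', map_smul, h, map_smul, map_one]
        rfl
      | add p q hp hq => rw [TensorProduct.add_tmul, map_add, hp, hq, map_add]; rfl
      | mul_X p x hp =>
        have := hG'2 (varC k x) (p ⊗ₜ[k] v)
        rw [h₀, hFX, hp] at this
        rw [mul_comm]
        refine this.trans ?_
        rw [map_mul, Module.End.mul_apply, hα (MvPolynomial.X x)]
        simp [f]
    ext a
    induction a using TensorProduct.induction_on with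
    | zero => simp
    | add x y hx hy => rw [map_add, map_add, hx, hy]
    | tmul u v => rw [key, hG]
  · rintro F' ⟨hF', -⟩
    apply nonUnital_adjoin_hom_ext
    rintro _ ⟨x, rfl⟩
    exact (hF' x).trans (hFX x).symm

/-- The action map `ρ₀`. -/
theorem exists_free_action :
    ∃ ρ₀ : (freeNonUnitalComm k X) ⊗[k] (freeSCVorOpen k X W) →ₗ[k] freeSCVorOpen k X W,
      IsFreeSCVorAction k X W ρ₀ := by
  let m : freeNonUnitalComm k X →ₗ[k] (MvPolynomial X k →ₗ[k] MvPolynomial X k) :=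
    (LinearMap.mul k (MvPolynomial X k)).comp (freeNonUnitalComm k X).toSubmodule.subtype
  refine ⟨TensorProduct.lift
    ((LinearMap.rTensorHom (freeNonUnitalAssoc k W)).comp m), ?_⟩
  intro c u v
  rfl

end Helpers

/-- The triple `(C₀, A₀, ρ₀)` is an `H₀(SC^vor)`-algebra and it is the free
`H₀(SC^vor)`-algebra generated by `(X, W)`. -/
theorem freeSCVorAlgebra
    (k : Type*) [Field k] [CharZero k] (X : Type*)
    (W : Type*) [AddCommGroup W] [Module k W] :
    -- `ρ₀` exists (and is unique, being determined on generators) ...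
    (∃ ρ₀ : (freeNonUnitalComm k X) ⊗[k] (freeSCVorOpen k X W) →ₗ[k] freeSCVorOpen k X W,
      IsFreeSCVorAction k X W ρ₀) ∧
    ∀ ρ₀ : (freeNonUnitalComm k X) ⊗[k] (freeSCVorOpen k X W) →ₗ[k] freeSCVorOpen k X W,
      IsFreeSCVorAction k X W ρ₀ →
      -- (1) `C₀` is commutative, `A₀` is associative with componentwise multiplication,
      -- and `ρ₀` satisfies the `H₀(SC^vor)`-algebra axioms ...
      ((∀ c c' : freeNonUnitalComm k X, c * c' = c' * c) ∧
      (∀ a b c : freeSCVorOpen k X W, a * b * c = a * (b * c)) ∧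
      (∀ (u u' : MvPolynomial X k) (v v' : freeNonUnitalAssoc k W),
        (u ⊗ₜ[k] v) * (u' ⊗ₜ[k] v') = (u * u') ⊗ₜ[k] (v * v')) ∧
      (∀ (c c' : freeNonUnitalComm k X) (a : freeSCVorOpen k X W),
        ρ₀ ((c * c') ⊗ₜ[k] a) = ρ₀ (c ⊗ₜ[k] ρ₀ (c' ⊗ₜ[k] a)) ∧
        ρ₀ ((c * c') ⊗ₜ[k] a) = ρ₀ (c' ⊗ₜ[k] ρ₀ (c ⊗ₜ[k] a))) ∧
      (∀ (c : freeNonUnitalComm k X) (a a' : freeSCVorOpen k X W),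
        ρ₀ (c ⊗ₜ[k] (a * a')) = ρ₀ (c ⊗ₜ[k] a) * a' ∧
        ρ₀ (c ⊗ₜ[k] (a * a')) = a * ρ₀ (c ⊗ₜ[k] a')) ∧
      -- (2) ... and `(C₀, A₀, ρ₀)` is the free such structure generated by `(X, W)`.
      (∀ (C : Type*) (_ : NonUnitalCommRing C) (_ : Module k C)
        (_ : SMulCommClass k C C) (_ : IsScalarTower k C C)
        (A : Type*) (_ : NonUnitalRing A) (_ : Module k A)
        (_ : SMulCommClass k A A) (_ : IsScalarTower k A A)
        (ρ : C ⊗[k] A →ₗ[k] A),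
        (∀ (c c' : C) (a : A),
          ρ ((c * c') ⊗ₜ[k] a) = ρ (c ⊗ₜ[k] ρ (c' ⊗ₜ[k] a)) ∧
          ρ ((c * c') ⊗ₜ[k] a) = ρ (c' ⊗ₜ[k] ρ (c ⊗ₜ[k] a))) →
        (∀ (c : C) (a a' : A),
          ρ (c ⊗ₜ[k] (a * a')) = ρ (c ⊗ₜ[k] a) * a' ∧
          ρ (c ⊗ₜ[k] (a * a')) = a * ρ (c ⊗ₜ[k] a')) →
        ∀ (φ : X → C) (ψ : W →ₗ[k] A),
        ∃! F : freeNonUnitalComm k X →ₙₐ[k] C,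
          (∀ x : X, F (varC k x) = φ x) ∧
          ∃! G : freeSCVorOpen k X W →ₙₐ[k] A,
            (∀ w : W, G ((1 : MvPolynomial X k) ⊗ₜ[k] iotaW k w) = ψ w) ∧
            (∀ (c : freeNonUnitalComm k X) (a : freeSCVorOpen k X W),
              G (ρ₀ (c ⊗ₜ[k] a)) = ρ (F c ⊗ₜ[k] G a)))) := by
  refine ⟨exists_free_action, ?_⟩
  intro ρ₀ h₀
  have e1 : ∀ (c c' : freeNonUnitalComm k X) (a : freeSCVorOpen k X W),
      ρ₀ ((c * c') ⊗ₜ[k] a) = ρ₀ (c ⊗ₜ[k] ρ₀ (c' ⊗ₜ[k] a)) := by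
    intro c c' a
    induction a using TensorProduct.induction_on with
    | zero => simp
    | add x y hx hy => simp only [TensorProduct.tmul_add, map_add, hx, hy]
    | tmul u v => rw [h₀, h₀, h₀, ← mul_assoc]; rfl
  have ecomm : ∀ c c' : freeNonUnitalComm k X, c * c' = c' * c := by
    intro c c'
    exact Subtype.ext (mul_comm (c : MvPolynomial X k) c')
  refine ⟨ecomm, fun a b c => ?_, fun u u' v v' => Algebra.TensorProduct.tmul_mul_tmul _ _ _ _,
    fun c c' a => ⟨e1 c c' a, by rw [ecomm, e1]⟩, ?_, ?_⟩
  · exact mul_assoc a b c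
  · intro c a a'
    induction a using TensorProduct.induction_on with
    | zero => simp
    | add x y hx hy =>
      simp only [TensorProduct.tmul_add, map_add, add_mul]
      exact ⟨by rw [hx.1, hy.1], by rw [hx.2, hy.2]⟩
    | tmul u v =>
      induction a' using TensorProduct.induction_on with
      | zero => simp
      | add x y hx hy =>
        simp only [TensorProduct.tmul_add, map_add, mul_add]
        exact ⟨by rw [hx.1, hy.1], by rw [hx.2, hy.2]⟩
      | tmul u' v' =>
        simp only [Algebra.TensorProduct.tmul_mul_tmul]
        rw [h₀, h₀, h₀, Algebra.TensorProduct.tmul_mul_tmul, Algebra.TensorProduct.tmul_mul_tmul]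
        exact ⟨by rw [mul_assoc], by rw [mul_left_comm]⟩
  · intro C _ _ _ _ A _ _ _ _ ρ h1 h2 φ ψ
    exact free_part_two ρ₀ h₀ C A ρ (fun c c' a => (h1 c c' a).1) (fun c a a' => (h2 c a a').1)
      (fun c a a' => (h2 c a a').2) φ ψ
end
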